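/- arXiv:2012.11565 — 2 statements merged into one kernel-verified Lean document; each statement's English description precedes it below -/
import Mathlib

section
/- There is an absolute constant C > 0 with the following property. Let w ≥ 2, let λ : ℕ → ℂ be finitely supported with λ_d = 0 unless d is squarefree with all prime factors < w, and define θ_n = Σ_{d | n} λ_d. Then Σ_{d | P(w)} d·| Σ_{m | P(w), d | m} λ_m/m |² ≤ C·∏_{p < w}(1 − 1/p)·Σ_{b | P(w)} (b/φ(b)²)·Σ_{e₁, e₂ | P(w), gcd(e₁,e₂)=1, gcd(e₁e₂, b)=1} |θ_{be₁}|·|θ_{be₂}|/(e₁·e₂·φ(e₁e₂)). -/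
open scoped Classical

/-- `d` is a squarefree positive integer all of whose prime factors are `< w`
(i.e. `d ∣ P(w)`). -/
def dividesPrimorial (w : ℝ) (d : ℕ) : Prop :=
  Squarefree d ∧ ∀ p ∈ d.primeFactors, (p : ℝ) < w

/-!
With `σ(n)` the sum of the divisors of `n`, opening the square on the left gives the quadratic form
`∑ m₁ m₂, σ(gcd(m₁, m₂)) / (m₁ m₂) ⟪λ_{m₁}, λ_{m₂}⟫`. Möbius inversion of its coefficients over the
multiples of `m₁` and `m₂` turns it into `∑ n₁ n₂, K(n₁, n₂) ⟪θ_{n₁}, θ_{n₂}⟫`, where `K` is an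
explicit Euler product. Write `n₁ = b e₁` and `n₂ = b e₂` with `b = gcd(n₁, n₂)`. A prime `p`
dividing neither `n₁` nor `n₂` contributes `1 - 1/p + 1/p²` to `K`; pulling this factor out at
every `p`, what remains is at most `p/(p - 1)²` for `p ∣ b` and `1/(p(p - 1))` for `p ∣ e₁e₂`.
Hence `|K(b e₁, b e₂)|` is at most `∏ (1 - 1/p + 1/p²)` times `b / (φ(b)² e₁e₂ φ(e₁e₂))`, and it
remains to apply Cauchy–Schwarz to the inner products. Finally,
`1 - 1/p + 1/p² = (1 + 1/(p - 1) - 1/p) (1 - 1/p)`, and the telescoping series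
`∑ (1/(n - 1) - 1/n)` shows that one may take `C = e`.
-/

open Finset
open scoped InnerProductSpace

section SquarefreeDivisors

variable {P : ℕ}

lemma prod_primeFactors_ite_dvd {M : Type*} [CommMonoid M] {m : ℕ} (hP : P ≠ 0) (hm : m ∣ P)
    (f : ℕ → M) :
    ∏ p ∈ P.primeFactors, (if p ∣ m then f p else 1) = ∏ p ∈ m.primeFactors, f p := by
  rw [← prod_filter, Nat.primeFactors_filter_dvd_of_dvd hP hm]

lemma natCast_eq_prod_primeFactors_ite {R : Type*} [CommSemiring R] {m : ℕ} (hP : Squarefree P)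
    (hm : m ∣ P) : (m : R) = ∏ p ∈ P.primeFactors, if p ∣ m then (p : R) else 1 := by
  rw [prod_primeFactors_ite_dvd hP.ne_zero hm, ← Nat.cast_prod,
    Nat.prod_primeFactors_of_squarefree (hP.squarefree_of_dvd hm)]

lemma natCast_totient_eq_prod_primeFactors_ite {R : Type*} [CommRing R] {m : ℕ}
    (hP : Squarefree P) (hm : m ∣ P) :
    (m.totient : R) = ∏ p ∈ P.primeFactors, if p ∣ m then (p : R) - 1 else 1 := by
  have hm' := hP.squarefree_of_dvd hm
  rw [prod_primeFactors_ite_dvd hP.ne_zero hm, Nat.totient_eq_div_primeFactors_mul,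
    Nat.prod_primeFactors_of_squarefree hm', Nat.div_self hm'.ne_zero.bot_lt, one_mul,
    Nat.cast_prod]
  exact prod_congr rfl fun p hp ↦ Nat.cast_pred (Nat.pos_of_mem_primeFactors hp)

lemma sum_divisors_eq_sum_powerset_primeFactors {M : Type*} [AddCommMonoid M]
    (hP : Squarefree P) (F : ℕ → M) :
    ∑ n ∈ P.divisors, F n = ∑ A ∈ P.primeFactors.powerset, F (∏ p ∈ A, p) := by
  rw [← Nat.divisors_filter_squarefree_of_squarefree hP,
    Nat.sum_divisors_filter_squarefree hP.ne_zero, Nat.factors_eq]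
  simp only [prod_val]
  rfl

lemma prod_primeFactors_add {R : Type*} [CommSemiring R] (hP : Squarefree P) (f g : ℕ → R) :
    ∏ p ∈ P.primeFactors, (f p + g p) =
      ∑ n ∈ P.divisors, ∏ p ∈ P.primeFactors, if p ∣ n then f p else g p := by
  rw [prod_add, sum_divisors_eq_sum_powerset_primeFactors hP]
  refine sum_congr rfl fun A hA ↦ ?_
  rw [mem_powerset] at hA
  have hprime : ∀ p ∈ A, p.Prime := fun p hp ↦ Nat.prime_of_mem_primeFactors (hA hp)
  have hdvd : ∀ p ∈ P.primeFactors, p ∣ ∏ q ∈ A, q ↔ p ∈ A := fun p hp ↦ by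
    rw [← Nat.primeFactors_prod hprime, Nat.mem_primeFactors_of_ne_zero
      (prod_ne_zero_iff.2 fun q hq ↦ (hprime q hq).ne_zero), Nat.primeFactors_prod hprime]
    exact (and_iff_right (Nat.prime_of_mem_primeFactors hp)).symm
  calc (∏ p ∈ A, f p) * ∏ p ∈ P.primeFactors \ A, g p
      = ∏ p ∈ P.primeFactors, A.piecewise f g p := by
        rw [prod_piecewise, inter_eq_right.2 hA]
    _ = ∏ p ∈ P.primeFactors, if p ∣ ∏ q ∈ A, q then f p else g p :=
        prod_congr rfl fun p hp ↦ by simp only [piecewise, hdvd p hp]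

lemma sum_multiples_prod_primeFactors_ite {R : Type*} [CommSemiring R] {m : ℕ}
    (hP : Squarefree P) (hm : m ∣ P) (f g : ℕ → R) :
    ∑ n ∈ P.divisors with m ∣ n, ∏ p ∈ P.primeFactors, (if p ∣ n then f p else g p) =
      ∏ p ∈ P.primeFactors, if p ∣ m then f p else f p + g p := by
  have hsplit : ∏ p ∈ P.primeFactors, (if p ∣ m then f p else f p + g p) =
      ∏ p ∈ P.primeFactors, (f p + if p ∣ m then 0 else g p) :=
    prod_congr rfl fun p _ ↦ by split_ifs <;> simp
  rw [hsplit, prod_primeFactors_add hP, sum_filter]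
  refine sum_congr rfl fun n hn ↦ ?_
  split_ifs with hmn
  · refine prod_congr rfl fun p _ ↦ ?_
    split_ifs with hpn hpm
    · rfl
    · exact absurd (hpm.trans hmn) hpn
    · rfl
  · obtain ⟨p, hpm, hpn⟩ : ∃ p ∈ m.primeFactors, p ∉ n.primeFactors := by
      rwa [← not_subset, ← Nat.prod_primeFactors_dvd_iff (Nat.pos_of_mem_divisors hn).ne',
        Nat.prod_primeFactors_of_squarefree (hP.squarefree_of_dvd hm)]
    have hpn' : ¬p ∣ n := fun h ↦ hpn <| Nat.mem_primeFactors.2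
      ⟨Nat.prime_of_mem_primeFactors hpm, h, (Nat.pos_of_mem_divisors hn).ne'⟩
    refine (prod_eq_zero (Nat.primeFactors_mono hm hP.ne_zero hpm) ?_).symm
    rw [if_neg hpn', if_pos (Nat.dvd_of_mem_primeFactors hpm)]

lemma sum_divisors_eq_prod_primeFactors_ite {R : Type*} [CommSemiring R] {m : ℕ}
    (hP : Squarefree P) (hm : m ∣ P) :
    ∑ d ∈ m.divisors, (d : R) = ∏ p ∈ P.primeFactors, if p ∣ m then (p : R) + 1 else 1 := by
  have hm' := hP.squarefree_of_dvd hm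
  rw [prod_primeFactors_ite_dvd hP.ne_zero hm, prod_primeFactors_add hm']
  exact sum_congr rfl fun d hd ↦
    natCast_eq_prod_primeFactors_ite hm' (Nat.dvd_of_mem_divisors hd)

lemma sum_divisors_comm {M : Type*} [AddCommMonoid M] (F : ℕ → ℕ → M) :
    ∑ n ∈ P.divisors, ∑ m ∈ n.divisors, F n m =
      ∑ m ∈ P.divisors, ∑ n ∈ P.divisors with m ∣ n, F n m := by
  refine sum_comm' fun n m ↦ ?_
  simp only [Nat.mem_divisors, mem_filter]
  constructor
  · rintro ⟨⟨hn, hP⟩, hm, -⟩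
    exact ⟨⟨⟨hn, hP⟩, hm⟩, hm.trans hn, hP⟩
  · rintro ⟨⟨⟨hn, hP⟩, hm⟩, -⟩
    exact ⟨⟨hn, hP⟩, hm, ne_zero_of_dvd_ne_zero hP hn⟩

lemma coprime_div_gcd_mul_div_gcd_gcd {m n : ℕ} (hm : Squarefree m) (hn : Squarefree n) :
    (m / m.gcd n * (n / m.gcd n)).Coprime (m.gcd n) := by
  refine Nat.Coprime.mul_left ?_ ?_
  · exact (Nat.coprime_div_gcd_of_squarefree hm hn.ne_zero).coprime_dvd_right
      (Nat.gcd_dvd_right m n)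
  · rw [Nat.gcd_comm]
    exact (Nat.coprime_div_gcd_of_squarefree hn hm.ne_zero).coprime_dvd_right
      (Nat.gcd_dvd_right n m)

lemma sum_divisors_sum_divisors_eq_sum_gcd {M : Type*} [AddCommMonoid M] (hP : Squarefree P)
    (F : ℕ → ℕ → M) :
    ∑ n₁ ∈ P.divisors, ∑ n₂ ∈ P.divisors, F n₁ n₂ =
      ∑ b ∈ P.divisors, ∑ e₁ ∈ P.divisors,
        ∑ e₂ ∈ P.divisors with e₁.Coprime e₂ ∧ (e₁ * e₂).Coprime b, F (b * e₁) (b * e₂) := by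
  simp only [sum_filter, ← sum_product']
  rw [← sum_filter]
  refine sum_nbij' (fun n ↦ (n.1.gcd n.2, n.1 / n.1.gcd n.2, n.2 / n.1.gcd n.2))
    (fun t ↦ (t.1 * t.2.1, t.1 * t.2.2)) ?_ ?_ ?_ ?_ ?_
  · rintro ⟨n₁, n₂⟩ hn
    simp only [mem_product, Nat.mem_divisors, mem_filter] at hn ⊢
    obtain ⟨⟨hn₁, hP₀⟩, hn₂, -⟩ := hn
    have hg₁ := Nat.gcd_dvd_left n₁ n₂
    have hg₂ := Nat.gcd_dvd_right n₁ n₂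
    have hs₁ := hP.squarefree_of_dvd hn₁
    have hs₂ := hP.squarefree_of_dvd hn₂
    exact ⟨⟨⟨hg₁.trans hn₁, hP₀⟩, ⟨(Nat.div_dvd_of_dvd hg₁).trans hn₁, hP₀⟩,
      (Nat.div_dvd_of_dvd hg₂).trans hn₂, hP₀⟩,
      Nat.coprime_div_gcd_div_gcd (Nat.gcd_pos_of_pos_right _ hs₂.ne_zero.bot_lt),
      coprime_div_gcd_mul_div_gcd_gcd hs₁ hs₂⟩
  · rintro ⟨b, e₁, e₂⟩ ht
    simp only [mem_product, Nat.mem_divisors, mem_filter] at ht ⊢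
    obtain ⟨⟨⟨hb, hP₀⟩, ⟨he₁, -⟩, he₂, -⟩, -, hcop⟩ := ht
    exact ⟨⟨hcop.coprime_mul_right.symm.mul_dvd_of_dvd_of_dvd hb he₁, hP₀⟩,
      hcop.coprime_mul_left.symm.mul_dvd_of_dvd_of_dvd hb he₂, hP₀⟩
  · rintro ⟨n₁, n₂⟩ -
    simp only [Nat.mul_div_cancel' (Nat.gcd_dvd_left n₁ n₂),
      Nat.mul_div_cancel' (Nat.gcd_dvd_right n₁ n₂)]
  · rintro ⟨b, e₁, e₂⟩ ht
    simp only [mem_product, Nat.mem_divisors, mem_filter] at ht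
    obtain ⟨⟨⟨hb, hP₀⟩, -⟩, hcop, -⟩ := ht
    have hb₀ := (ne_zero_of_dvd_ne_zero hP₀ hb).bot_lt
    simp only [Nat.gcd_mul_left, hcop.gcd_eq_one, mul_one, Nat.mul_div_cancel_left _ hb₀]
  · rintro ⟨n₁, n₂⟩ -
    simp only [Nat.mul_div_cancel' (Nat.gcd_dvd_left n₁ n₂),
      Nat.mul_div_cancel' (Nat.gcd_dvd_right n₁ n₂)]

end SquarefreeDivisors

section DivisorSumKernel

/-- The coefficients of `∑ σ(gcd(m₁, m₂)) / (m₁ m₂) ⟪λ_{m₁}, λ_{m₂}⟫`, a quadratic form in the `λ_m`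
for `m ∣ P`, after the change of variables to the divisor sums `θ_n = ∑_{d ∣ n} λ_d`, for `P`
squarefree. The four values of each factor come from inclusion–exclusion at `p` applied to the local
factor of `σ(gcd(m₁, m₂)) / (m₁ m₂)`, which is `1/p + 1/p²`, `1/p` or `1` according as `p` divides
both, one or none of `m₁` and `m₂`. -/
noncomputable def divisorSumKernel (P n₁ n₂ : ℕ) : ℝ :=
  ∏ p ∈ P.primeFactors,
    if p ∣ n₂ then (if p ∣ n₁ then 1 / (p : ℝ) + 1 / (p : ℝ) ^ 2 else -(1 / (p : ℝ) ^ 2))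
    else (if p ∣ n₁ then -(1 / (p : ℝ) ^ 2) else 1 - 1 / (p : ℝ) + 1 / (p : ℝ) ^ 2)

variable {P : ℕ}

lemma sum_divisors_gcd_div_mul_eq_prod {m₁ m₂ : ℕ} (hP : Squarefree P) (hm₁ : m₁ ∣ P)
    (hm₂ : m₂ ∣ P) :
    (∑ d ∈ (m₁.gcd m₂).divisors, (d : ℝ)) / (m₁ * m₂) =
      ∏ p ∈ P.primeFactors, if p ∣ m₁ then
        (if p ∣ m₂ then 1 / (p : ℝ) + 1 / (p : ℝ) ^ 2 else 1 / (p : ℝ))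
      else (if p ∣ m₂ then 1 / (p : ℝ) else 1) := by
  rw [sum_divisors_eq_prod_primeFactors_ite hP ((Nat.gcd_dvd_left m₁ m₂).trans hm₁),
    natCast_eq_prod_primeFactors_ite hP hm₁, natCast_eq_prod_primeFactors_ite hP hm₂,
    ← prod_mul_distrib, ← prod_div_distrib]
  refine prod_congr rfl fun p hp ↦ ?_
  have hp₀ : (p : ℝ) ≠ 0 := by exact_mod_cast (Nat.pos_of_mem_primeFactors hp).ne'
  by_cases h₁ : p ∣ m₁ <;> by_cases h₂ : p ∣ m₂ <;>
    simp only [Nat.dvd_gcd_iff, h₁, h₂, and_self, and_true, and_false, if_true, if_false] <;>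
    field_simp

lemma sum_multiples_sum_multiples_divisorSumKernel {m₁ m₂ : ℕ} (hP : Squarefree P)
    (hm₁ : m₁ ∣ P) (hm₂ : m₂ ∣ P) :
    ∑ n₁ ∈ P.divisors with m₁ ∣ n₁, ∑ n₂ ∈ P.divisors with m₂ ∣ n₂, divisorSumKernel P n₁ n₂ =
      (∑ d ∈ (m₁.gcd m₂).divisors, (d : ℝ)) / (m₁ * m₂) := by
  have hrow (n₁ : ℕ) :
      ∑ n₂ ∈ P.divisors with m₂ ∣ n₂, divisorSumKernel P n₁ n₂ =
        ∏ p ∈ P.primeFactors, if p ∣ n₁ then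
          (if p ∣ m₂ then 1 / (p : ℝ) + 1 / (p : ℝ) ^ 2 else 1 / (p : ℝ))
        else (if p ∣ m₂ then -(1 / (p : ℝ) ^ 2) else 1 - 1 / (p : ℝ)) := by
    simp only [divisorSumKernel]
    rw [sum_multiples_prod_primeFactors_ite hP hm₂]
    exact prod_congr rfl fun p _ ↦ by split_ifs <;> ring
  simp only [hrow]
  rw [sum_multiples_prod_primeFactors_ite hP hm₁, sum_divisors_gcd_div_mul_eq_prod hP hm₁ hm₂]
  exact prod_congr rfl fun p _ ↦ by split_ifs <;> ring

variable {E : Type*} [SeminormedAddCommGroup E] [InnerProductSpace ℝ E]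

lemma sum_mul_norm_sq_eq_sum_gcd (lam : ℕ → E) :
    ∑ d ∈ P.divisors, (d : ℝ) * ‖∑ m ∈ P.divisors with d ∣ m, (m : ℝ)⁻¹ • lam m‖ ^ 2 =
      ∑ m₁ ∈ P.divisors, ∑ m₂ ∈ P.divisors,
        (∑ d ∈ (m₁.gcd m₂).divisors, (d : ℝ)) / (m₁ * m₂) * ⟪lam m₁, lam m₂⟫_ℝ := by
  have hexpand (d : ℕ) :
      (d : ℝ) * ‖∑ m ∈ P.divisors with d ∣ m, (m : ℝ)⁻¹ • lam m‖ ^ 2 =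
        ∑ m₁ ∈ P.divisors, ∑ m₂ ∈ P.divisors,
          (if d ∣ m₁ ∧ d ∣ m₂ then (d : ℝ) else 0) / (m₁ * m₂) * ⟪lam m₁, lam m₂⟫_ℝ := by
    simp only [← real_inner_self_eq_norm_sq, sum_filter, sum_inner, inner_sum, mul_sum]
    rw [sum_comm]
    refine sum_congr rfl fun m₁ _ ↦ sum_congr rfl fun m₂ _ ↦ ?_
    by_cases h₁ : d ∣ m₁ <;> by_cases h₂ : d ∣ m₂ <;>
      simp only [h₁, h₂, and_self, and_true, and_false, if_true, if_false, inner_zero_left,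
        inner_zero_right, real_inner_smul_left, real_inner_smul_right] <;>
      ring
  simp only [hexpand]
  rw [sum_comm]
  refine sum_congr rfl fun m₁ hm₁ ↦ ?_
  rw [sum_comm]
  refine sum_congr rfl fun m₂ _ ↦ ?_
  rw [← sum_mul, ← sum_div, ← sum_filter]
  congr 3
  ext d
  simp only [mem_filter, Nat.mem_divisors, Nat.dvd_gcd_iff] at hm₁ ⊢
  refine ⟨fun h ↦ ⟨h.2, Nat.gcd_ne_zero_left (ne_zero_of_dvd_ne_zero hm₁.2 hm₁.1)⟩,
    fun h ↦ ⟨⟨h.1.1.trans hm₁.1, hm₁.2⟩, h.1⟩⟩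

lemma sum_mul_inner_divisorSum (K : ℕ → ℕ → ℝ) (lam : ℕ → E) :
    ∑ n₁ ∈ P.divisors, ∑ n₂ ∈ P.divisors,
        K n₁ n₂ * ⟪∑ m ∈ n₁.divisors, lam m, ∑ m ∈ n₂.divisors, lam m⟫_ℝ =
      ∑ m₁ ∈ P.divisors, ∑ m₂ ∈ P.divisors,
        (∑ n₁ ∈ P.divisors with m₁ ∣ n₁, ∑ n₂ ∈ P.divisors with m₂ ∣ n₂, K n₁ n₂) *
          ⟪lam m₁, lam m₂⟫_ℝ := by
  simp only [sum_inner, inner_sum, mul_sum, sum_mul]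
  calc ∑ n₁ ∈ P.divisors, ∑ n₂ ∈ P.divisors, ∑ m₂ ∈ n₂.divisors, ∑ m₁ ∈ n₁.divisors,
        K n₁ n₂ * ⟪lam m₁, lam m₂⟫_ℝ
      = ∑ n₁ ∈ P.divisors, ∑ m₁ ∈ n₁.divisors, ∑ n₂ ∈ P.divisors, ∑ m₂ ∈ n₂.divisors,
          K n₁ n₂ * ⟪lam m₁, lam m₂⟫_ℝ := by
        refine sum_congr rfl fun n₁ _ ↦ ?_
        rw [sum_comm]
        exact sum_congr rfl fun n₂ _ ↦ sum_comm
    _ = ∑ m₁ ∈ P.divisors, ∑ n₁ ∈ P.divisors with m₁ ∣ n₁, ∑ m₂ ∈ P.divisors,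
          ∑ n₂ ∈ P.divisors with m₂ ∣ n₂, K n₁ n₂ * ⟪lam m₁, lam m₂⟫_ℝ := by
        simp only [sum_divisors_comm]
    _ = _ := sum_congr rfl fun m₁ _ ↦ sum_comm

theorem sum_mul_norm_sq_eq_sum_divisorSumKernel (hP : Squarefree P) (lam : ℕ → E) :
    ∑ d ∈ P.divisors, (d : ℝ) * ‖∑ m ∈ P.divisors with d ∣ m, (m : ℝ)⁻¹ • lam m‖ ^ 2 =
      ∑ n₁ ∈ P.divisors, ∑ n₂ ∈ P.divisors, divisorSumKernel P n₁ n₂ *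
        ⟪∑ m ∈ n₁.divisors, lam m, ∑ m ∈ n₂.divisors, lam m⟫_ℝ := by
  rw [sum_mul_norm_sq_eq_sum_gcd, sum_mul_inner_divisorSum]
  refine sum_congr rfl fun m₁ hm₁ ↦ sum_congr rfl fun m₂ hm₂ ↦ ?_
  rw [sum_multiples_sum_multiples_divisorSumKernel hP (Nat.dvd_of_mem_divisors hm₁)
    (Nat.dvd_of_mem_divisors hm₂)]

end DivisorSumKernel

section KernelBound

lemma sum_inv_pred_sub_inv_le_one {S : Finset ℕ} (hS : ∀ n ∈ S, 2 ≤ n) :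
    ∑ n ∈ S, (((n : ℝ) - 1)⁻¹ - (n : ℝ)⁻¹) ≤ 1 := by
  have hsub : S ⊆ Ico 2 (S.sup id + 2) := fun n hn ↦
    mem_Ico.2 ⟨hS n hn, by have := le_sup (f := id) hn; simp only [id] at this; omega⟩
  have htel (N : ℕ) :
      ∑ n ∈ Ico 2 (N + 2), (((n : ℝ) - 1)⁻¹ - (n : ℝ)⁻¹) = 1 - ((N : ℝ) + 1)⁻¹ := by
    rw [sum_Ico_eq_sum_range, Nat.add_sub_cancel]
    convert sum_range_sub' (fun n : ℕ ↦ ((n : ℝ) + 1)⁻¹) N using 3 <;> push_cast <;> ring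
  calc ∑ n ∈ S, (((n : ℝ) - 1)⁻¹ - (n : ℝ)⁻¹)
      ≤ ∑ n ∈ Ico 2 (S.sup id + 2), (((n : ℝ) - 1)⁻¹ - (n : ℝ)⁻¹) :=
        sum_le_sum_of_subset_of_nonneg hsub fun n hn _ ↦ by
          have hn' : (2 : ℝ) ≤ n := by exact_mod_cast (mem_Ico.1 hn).1
          exact sub_nonneg.2 (inv_anti₀ (by linarith) (by linarith))
    _ = 1 - ((S.sup id : ℕ) + 1 : ℝ)⁻¹ := htel _
    _ ≤ 1 := sub_le_self _ (by positivity)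

lemma one_sub_one_div_add_one_div_sq_pos (x : ℝ) : 0 < 1 - 1 / x + 1 / x ^ 2 := by
  have hsq : 1 - 1 / x + 1 / x ^ 2 = (1 / x - 1 / 2) ^ 2 + 3 / 4 := by ring
  rw [hsq]
  positivity

lemma one_sub_one_div_add_one_div_sq_le_exp {x : ℝ} (hx : 1 < x) :
    1 - 1 / x + 1 / x ^ 2 ≤ Real.exp ((x - 1)⁻¹ - x⁻¹) * (1 - 1 / x) := by
  have hx₀ : 0 < x := by linarith
  have hx₁ : 0 < x - 1 := by linarith
  have hx₂ : 0 ≤ 1 - 1 / x := sub_nonneg.2 ((div_le_one hx₀).2 hx.le)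
  calc 1 - 1 / x + 1 / x ^ 2 = ((x - 1)⁻¹ - x⁻¹ + 1) * (1 - 1 / x) := by
        field_simp
        ring
    _ ≤ _ := mul_le_mul_of_nonneg_right (Real.add_one_le_exp _) hx₂

lemma prod_one_sub_one_div_add_one_div_sq_le {S : Finset ℕ} (hS : ∀ n ∈ S, 2 ≤ n) :
    ∏ n ∈ S, (1 - 1 / (n : ℝ) + 1 / (n : ℝ) ^ 2) ≤
      Real.exp 1 * ∏ n ∈ S, (1 - 1 / (n : ℝ)) := by
  have hnonneg : 0 ≤ ∏ n ∈ S, (1 - 1 / (n : ℝ)) :=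
    prod_nonneg fun n _ ↦ sub_nonneg.2 (by simpa only [one_div] using Nat.cast_inv_le_one n)
  calc ∏ n ∈ S, (1 - 1 / (n : ℝ) + 1 / (n : ℝ) ^ 2)
      ≤ ∏ n ∈ S, (Real.exp (((n : ℝ) - 1)⁻¹ - (n : ℝ)⁻¹) * (1 - 1 / (n : ℝ))) :=
        prod_le_prod (fun n _ ↦ (one_sub_one_div_add_one_div_sq_pos n).le) fun n hn ↦
          one_sub_one_div_add_one_div_sq_le_exp (by exact_mod_cast hS n hn)
    _ = Real.exp (∑ n ∈ S, (((n : ℝ) - 1)⁻¹ - (n : ℝ)⁻¹)) * ∏ n ∈ S, (1 - 1 / (n : ℝ)) := by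
        rw [prod_mul_distrib, Real.exp_sum]
    _ ≤ Real.exp 1 * ∏ n ∈ S, (1 - 1 / (n : ℝ)) := by
        gcongr
        exact sum_inv_pred_sub_inv_le_one hS

variable {P : ℕ}

lemma div_totient_sq_div_eq_prod {b e : ℕ} (hP : Squarefree P) (hb : b ∣ P) (he : e ∣ P) :
    (b : ℝ) / (b.totient : ℝ) ^ 2 / (e * e.totient) =
      ∏ p ∈ P.primeFactors, (if p ∣ b then (p : ℝ) / ((p : ℝ) - 1) ^ 2 else 1) *
        (if p ∣ e then 1 / ((p : ℝ) * (p - 1)) else 1) := by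
  rw [natCast_eq_prod_primeFactors_ite hP hb, natCast_eq_prod_primeFactors_ite hP he,
    natCast_totient_eq_prod_primeFactors_ite hP hb,
    natCast_totient_eq_prod_primeFactors_ite hP he, ← prod_pow, ← prod_mul_distrib,
    ← prod_div_distrib, ← prod_div_distrib]
  exact prod_congr rfl fun p _ ↦ by split_ifs <;> simp [div_eq_mul_inv]

lemma one_div_add_one_div_sq_le_mul_div_sub_one_sq {x : ℝ} (hx : 1 < x) :
    1 / x + 1 / x ^ 2 ≤ (1 - 1 / x + 1 / x ^ 2) * (x / (x - 1) ^ 2) := by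
  have hx₁ : 0 < x - 1 := by linarith
  have : 0 < x := by linarith
  have hdiff : (1 - 1 / x + 1 / x ^ 2) * (x / (x - 1) ^ 2) - (1 / x + 1 / x ^ 2) =
      (2 * x - 1) / (x ^ 2 * (x - 1) ^ 2) := by
    field_simp
    ring
  have hnonneg : 0 ≤ (2 * x - 1) / (x ^ 2 * (x - 1) ^ 2) :=
    div_nonneg (by linarith) (by positivity)
  linarith

lemma one_div_sq_le_mul_one_div_mul_sub_one {x : ℝ} (hx : 1 < x) :
    1 / x ^ 2 ≤ (1 - 1 / x + 1 / x ^ 2) * (1 / (x * (x - 1))) := by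
  have hx₁ : 0 < x - 1 := by linarith
  have : 0 < x := by linarith
  have hdiff : (1 - 1 / x + 1 / x ^ 2) * (1 / (x * (x - 1))) - 1 / x ^ 2 =
      1 / (x ^ 3 * (x - 1)) := by
    field_simp
    ring
  have hnonneg : 0 ≤ 1 / (x ^ 3 * (x - 1)) := by positivity
  linarith

lemma abs_divisorSumKernel_factor_le {p b e₁ e₂ : ℕ} (hp : p.Prime) (he : e₁.Coprime e₂)
    (hbe : (e₁ * e₂).Coprime b) :
    |if p ∣ b * e₂ then
        (if p ∣ b * e₁ then 1 / (p : ℝ) + 1 / (p : ℝ) ^ 2 else -(1 / (p : ℝ) ^ 2))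
      else (if p ∣ b * e₁ then -(1 / (p : ℝ) ^ 2) else 1 - 1 / (p : ℝ) + 1 / (p : ℝ) ^ 2)| ≤
      (1 - 1 / (p : ℝ) + 1 / (p : ℝ) ^ 2) * ((if p ∣ b then (p : ℝ) / ((p : ℝ) - 1) ^ 2 else 1) *
        (if p ∣ e₁ * e₂ then 1 / ((p : ℝ) * (p - 1)) else 1)) := by
  have hp₁ : (1 : ℝ) < p := by exact_mod_cast hp.one_lt
  have hsq : |-(1 / (p : ℝ) ^ 2)| = 1 / (p : ℝ) ^ 2 := by
    rw [abs_neg, abs_of_nonneg (by positivity)]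
  by_cases hb : p ∣ b
  · have he₁₂ : ¬p ∣ e₁ * e₂ := fun h ↦ Nat.not_coprime_of_dvd_of_dvd hp.one_lt h hb hbe
    rw [if_pos (hb.mul_right e₂), if_pos (hb.mul_right e₁), if_pos hb, if_neg he₁₂, mul_one,
      abs_of_nonneg (by positivity)]
    exact one_div_add_one_div_sq_le_mul_div_sub_one_sq hp₁
  · simp only [hp.dvd_mul, hb, false_or, if_false, one_mul]
    by_cases h₁ : p ∣ e₁
    · have h₂ : ¬p ∣ e₂ := fun h ↦ Nat.not_coprime_of_dvd_of_dvd hp.one_lt h₁ h he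
      simp only [h₁, h₂, true_or, if_true, if_false, hsq]
      exact one_div_sq_le_mul_one_div_mul_sub_one hp₁
    · by_cases h₂ : p ∣ e₂
      · simp only [h₁, h₂, or_true, if_true, if_false, hsq]
        exact one_div_sq_le_mul_one_div_mul_sub_one hp₁
      · simp only [h₁, h₂, or_self, if_false, mul_one]
        exact (abs_of_pos (one_sub_one_div_add_one_div_sq_pos p)).le

lemma abs_divisorSumKernel_le {b e₁ e₂ : ℕ} (hP : Squarefree P) (hb : b ∣ P) (he₁ : e₁ ∣ P)
    (he₂ : e₂ ∣ P) (he : e₁.Coprime e₂) (hbe : (e₁ * e₂).Coprime b) :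
    |divisorSumKernel P (b * e₁) (b * e₂)| ≤
      Real.exp 1 * (∏ p ∈ P.primeFactors, (1 - 1 / (p : ℝ))) *
        ((b : ℝ) / (b.totient : ℝ) ^ 2 / ((e₁ * e₂ : ℕ) * (e₁ * e₂).totient)) := by
  have hlocal := prod_le_prod (fun _ _ ↦ abs_nonneg _) fun p hp ↦
    abs_divisorSumKernel_factor_le (Nat.prime_of_mem_primeFactors (n := P) hp) he hbe
  rw [← abs_prod, prod_mul_distrib,
    ← div_totient_sq_div_eq_prod hP hb (he.mul_dvd_of_dvd_of_dvd he₁ he₂)] at hlocal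
  refine hlocal.trans (mul_le_mul_of_nonneg_right (prod_one_sub_one_div_add_one_div_sq_le fun p hp ↦
    (Nat.prime_of_mem_primeFactors hp).two_le) (by positivity))

end KernelBound

section Primorial

lemma primeFactors_primorial_ceil_sub_one (w : ℝ) :
    (primorial (⌈w⌉₊ - 1)).primeFactors = (range ⌈w⌉₊).filter Nat.Prime := by
  ext p
  rw [primeFactors_primorial, Nat.mem_primesLE, mem_filter, mem_range]
  exact and_congr_left fun hp ↦ by have := hp.pos; omega

lemma dividesPrimorial_iff_mem_divisors_primorial {w : ℝ} {d : ℕ} :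
    dividesPrimorial w d ↔ d ∈ (primorial (⌈w⌉₊ - 1)).divisors := by
  have hsub : (∀ p ∈ d.primeFactors, (p : ℝ) < w) ↔
      d.primeFactors ⊆ (primorial (⌈w⌉₊ - 1)).primeFactors := by
    rw [primeFactors_primorial_ceil_sub_one]
    exact forall₂_congr fun p hp ↦ by
      simp only [mem_filter, mem_range, Nat.lt_ceil, Nat.prime_of_mem_primeFactors hp, and_true]
  rw [dividesPrimorial, hsub, Nat.mem_divisors]
  constructor
  · rintro ⟨hd, hle⟩
    rw [← Nat.prod_primeFactors_dvd_iff (primorial_ne_zero _),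
      Nat.prod_primeFactors_of_squarefree hd] at hle
    exact ⟨hle, primorial_ne_zero _⟩
  · rintro ⟨hdvd, hne⟩
    exact ⟨(squarefree_primorial _).squarefree_of_dvd hdvd, Nat.primeFactors_mono hdvd hne⟩

lemma tsum_ite_dividesPrimorial {M : Type*} [AddCommMonoid M] [TopologicalSpace M] (w : ℝ)
    (F : ℕ → M) :
    ∑' d, (if dividesPrimorial w d then F d else 0) =
      ∑ d ∈ (primorial (⌈w⌉₊ - 1)).divisors, F d := by
  simp only [dividesPrimorial_iff_mem_divisors_primorial]
  rw [tsum_eq_sum fun d hd ↦ if_neg hd]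
  exact sum_congr rfl fun d hd ↦ if_pos hd

lemma tsum_ite_dividesPrimorial_and {M : Type*} [AddCommMonoid M] [TopologicalSpace M] (w : ℝ)
    (Q : ℕ → Prop) [DecidablePred Q] (F : ℕ → M) :
    ∑' d, (if dividesPrimorial w d ∧ Q d then F d else 0) =
      ∑ d ∈ (primorial (⌈w⌉₊ - 1)).divisors with Q d, F d := by
  simp only [ite_and, tsum_ite_dividesPrimorial, sum_filter]

lemma tsum_tsum_ite_dividesPrimorial_and {M : Type*} [AddCommMonoid M] [TopologicalSpace M]
    (w : ℝ) (Q : ℕ → ℕ → Prop) [∀ e₁, DecidablePred (Q e₁)] (F : ℕ → ℕ → M) :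
    ∑' e₁, ∑' e₂, (if dividesPrimorial w e₁ ∧ dividesPrimorial w e₂ ∧ Q e₁ e₂
      then F e₁ e₂ else 0) =
      ∑ e₁ ∈ (primorial (⌈w⌉₊ - 1)).divisors,
        ∑ e₂ ∈ (primorial (⌈w⌉₊ - 1)).divisors with Q e₁ e₂, F e₁ e₂ := by
  rw [← tsum_ite_dividesPrimorial]
  refine tsum_congr fun e₁ ↦ ?_
  split_ifs with h <;> simp [h, tsum_ite_dividesPrimorial_and]

end Primorial

theorem mean_square_sieve_weight_corrected_lemma_general {E : Type*} [SeminormedAddCommGroup E]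
    [InnerProductSpace ℝ E] {P : ℕ} (hP : Squarefree P) (lam : ℕ → E) :
    ∑ d ∈ P.divisors, (d : ℝ) * ‖∑ m ∈ P.divisors with d ∣ m, (m : ℝ)⁻¹ • lam m‖ ^ 2 ≤
      Real.exp 1 * (∏ p ∈ P.primeFactors, (1 - 1 / (p : ℝ))) *
        ∑ b ∈ P.divisors, (b : ℝ) / (b.totient : ℝ) ^ 2 *
          ∑ e₁ ∈ P.divisors, ∑ e₂ ∈ P.divisors with e₁.Coprime e₂ ∧ (e₁ * e₂).Coprime b,
            ‖∑ d ∈ (b * e₁).divisors, lam d‖ * ‖∑ d ∈ (b * e₂).divisors, lam d‖ /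
              ((e₁ : ℝ) * e₂ * (e₁ * e₂).totient) := by
  rw [sum_mul_norm_sq_eq_sum_divisorSumKernel hP, sum_divisors_sum_divisors_eq_sum_gcd hP]
  simp only [mul_sum]
  refine sum_le_sum fun b hb ↦ sum_le_sum fun e₁ he₁ ↦ sum_le_sum fun e₂ he₂ ↦ ?_
  simp only [mem_filter, Nat.mem_divisors] at hb he₁ he₂
  obtain ⟨⟨he₂, -⟩, he, hbe⟩ := he₂
  have hK := abs_divisorSumKernel_le hP hb.1 he₁.1 he₂ he hbe
  have hinner := abs_real_inner_le_norm (∑ d ∈ (b * e₁).divisors, lam d)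
    (∑ d ∈ (b * e₂).divisors, lam d)
  calc divisorSumKernel P (b * e₁) (b * e₂) *
        ⟪∑ d ∈ (b * e₁).divisors, lam d, ∑ d ∈ (b * e₂).divisors, lam d⟫_ℝ
      ≤ |divisorSumKernel P (b * e₁) (b * e₂)| *
        |⟪∑ d ∈ (b * e₁).divisors, lam d, ∑ d ∈ (b * e₂).divisors, lam d⟫_ℝ| := by
        rw [← abs_mul]
        exact le_abs_self _
    _ ≤ _ := mul_le_mul hK hinner (abs_nonneg _) ((abs_nonneg _).trans hK)
    _ = _ := by push_cast; ring

/-- Corrected form of Lemma 6.18 of Friedlander–Iwaniec, Opera de Cribro: for `w ≥ 2`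
and finitely supported `λ : ℕ → ℂ` supported on squarefree integers with all prime
factors `< w`, writing `θ_n = Σ_{d ∣ n} λ_d`,
`Σ_{d ∣ P(w)} d·|Σ_{m ∣ P(w), d ∣ m} λ_m/m|² ≤ C·Π_{p<w}(1 − 1/p)·
  Σ_{b ∣ P(w)} (b/φ(b)²)·Σ_{e₁,e₂ ∣ P(w), (e₁,e₂)=1, (e₁e₂,b)=1}
    |θ_{be₁}|·|θ_{be₂}|/(e₁e₂φ(e₁e₂))`. -/
theorem mean_square_sieve_weight_corrected_lemma :
    ∃ C : ℝ, 0 < C ∧ ∀ w : ℝ, 2 ≤ w → ∀ lam : ℕ → ℂ,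
      (Function.support lam).Finite →
      (∀ d : ℕ, lam d ≠ 0 → dividesPrimorial w d) →
      (∑' d : ℕ, if dividesPrimorial w d then
          (d : ℝ) * ‖∑' m : ℕ, if dividesPrimorial w m ∧ d ∣ m then lam m / m else 0‖ ^ 2
        else 0) ≤
      C * (∏ p ∈ (Finset.range ⌈w⌉₊).filter Nat.Prime, (1 - 1 / (p : ℝ))) *
        ∑' b : ℕ, (if dividesPrimorial w b then
          (b : ℝ) / (Nat.totient b : ℝ) ^ 2 *
            ∑' e₁ : ℕ, ∑' e₂ : ℕ,
              (if dividesPrimorial w e₁ ∧ dividesPrimorial w e₂ ∧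
                  Nat.gcd e₁ e₂ = 1 ∧ Nat.gcd (e₁ * e₂) b = 1 then
                ‖∑ d ∈ (b * e₁).divisors, lam d‖ * ‖∑ d ∈ (b * e₂).divisors, lam d‖ /
                  ((e₁ : ℝ) * e₂ * Nat.totient (e₁ * e₂))
              else 0)
        else 0) := by
  refine ⟨Real.exp 1, Real.exp_pos 1, fun w _ lam _ _ ↦ ?_⟩
  have hsmul (m : ℕ) : lam m / m = (m : ℝ)⁻¹ • lam m := by
    simp [div_eq_inv_mul]
  simp only [tsum_tsum_ite_dividesPrimorial_and, tsum_ite_dividesPrimorial_and,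
    tsum_ite_dividesPrimorial, hsmul, ← primeFactors_primorial_ceil_sub_one]
  exact mean_square_sieve_weight_corrected_lemma_general (squarefree_primorial _) lam
end

section
/- Fix δ ∈ (0, 1/30000]. There is a constant C(δ) such that for all X ≥ 2, setting w = X^δ and E = X^{1/1000}, the β-sieve weights ρ_e^± with β = 30 and level E satisfy Σ_{d | P(w)} d·( Σ_{m | P(w), d | m} ρ_m^±/m )² ≤ C(δ)/log X, for both choices of sign. -/
open scoped Classical

/-- Generic (β-)sieve weight: for squarefree `d = p₁⋯p_r` with primes
`lo ≤ p_r < ⋯ < p₁ < hi` satisfying `p₁⋯p_m·p_m^β < lvl` for all `m ≤ r` of the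
prescribed parity (odd if `useOdd`, even otherwise), the weight is `μ(d)`;
otherwise it is `0` (and `1` gets weight `μ(1) = 1`). -/
noncomputable def sieveWeight (lo hi lvl : ℝ) (β : ℕ) (useOdd : Bool) (d : ℕ) : ℝ :=
  if Squarefree d ∧ (∀ p ∈ d.primeFactors, lo ≤ (p : ℝ) ∧ (p : ℝ) < hi) ∧
      (∀ m : ℕ, 1 ≤ m → m ≤ d.primeFactorsList.length →
        (if useOdd then Odd m else Even m) →
        (((d.primeFactorsList.reverse.take m).prod : ℕ) : ℝ) *
          ((d.primeFactorsList.reverse.getD (m - 1) 1 : ℕ) : ℝ) ^ β < lvl)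
  then (ArithmeticFunction.moebius d : ℝ) else 0

/-!
A set `M` of primes stands for the squarefree integer `∏ q ∈ M, q`. Unless all β-sieve conditions
hold for `M`, there is a largest `p ∈ M` at which the condition fails, so the inner sum over
admissible `M` is the sum over all `M` minus, for each prime `p < z`, the sum over the `M` that
first fail at `p`. The mean square of the full sums is the Euler product of `1 - 1 / q + 1 / q ^ 2`,
which is `≪ 1 / log z`.

A first failure at `p` depends only on the elements of `M` above `p`, so its sum splits into a full
Möbius sum over primes below `p` and a sum over primes above `p`. The logarithm of the level that
remains of `E` loses at most the proportion `2 / (β + 1)` with every two prime factors. Hence, if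
`n` elements of `M` exceed `p`, then `log p / log z ≫ (1 - 2 / (β + 1)) ^ (n / 2)`, and for `β ≥ 12`
the indicator of a first failure is `≪ 2 ^ n * (log p / log z) ^ 8`. Taking absolute values above
`p` costs `(log z / log p) ^ 12` in the mean square, against a gain of `(log p / log z) ^ 16`. The
sum over `p` is recombined by Cauchy–Schwarz, with weights chosen so that the resulting sum over
`p` is controlled by `∑ log p / (p * log z)`.
-/

namespace BetaSieve

open Finset Real

/-! ### Sums and products over primes -/

lemma prod_primesLE_pow_div_dvd_factorial (n : ℕ) :
    ∏ p ∈ n.primesLE, p ^ (n / p) ∣ n.factorial := by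
  refine prod_dvd_of_isRelPrime (fun p hp q hq hpq => ?_) fun p hp => ?_
  · rw [mem_coe, Nat.mem_primesLE] at hp hq
    exact Nat.coprime_iff_isRelPrime.1
      (Nat.Coprime.pow _ _ ((Nat.coprime_primes hp.2 hq.2).2 hpq))
  · obtain ⟨hpn, hp⟩ := Nat.mem_primesLE.1 hp
    rw [hp.pow_dvd_factorial_iff (Nat.lt_succ_of_le (Nat.log_le_self p n))]
    calc n / p = n / p ^ 1 := by rw [pow_one]
      _ ≤ ∑ i ∈ Ico 1 (n + 1), n / p ^ i :=
          single_le_sum_of_canonicallyOrdered (f := fun i => n / p ^ i)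
            (mem_Ico.2 ⟨le_rfl, by have := hp.pos; omega⟩)

lemma sum_primesLE_log_div_le {n : ℕ} (hn : n ≠ 0) :
    ∑ p ∈ n.primesLE, log p / p ≤ log n + log 4 := by
  have hn₀ : (0 : ℝ) < n := by positivity
  have hfactorial : ∑ p ∈ n.primesLE, (n / p : ℕ) * log p ≤ n * log n := by
    have hle : ∏ p ∈ n.primesLE, p ^ (n / p) ≤ n ^ n :=
      (Nat.le_of_dvd n.factorial_pos (prod_primesLE_pow_div_dvd_factorial n)).trans
        n.factorial_le_pow
    have hpos : ∀ p ∈ n.primesLE, 0 < p ^ (n / p) := fun p hp =>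
      pow_pos (Nat.mem_primesLE.1 hp).2.pos _
    calc ∑ p ∈ n.primesLE, (n / p : ℕ) * log p
        = log (∏ p ∈ n.primesLE, p ^ (n / p) : ℕ) := by
          rw [Nat.cast_prod, log_prod fun p hp => Nat.cast_ne_zero.2 (hpos p hp).ne']
          simp only [Nat.cast_pow, log_pow]
      _ ≤ log (n ^ n : ℕ) :=
          log_le_log (Nat.cast_pos.2 (prod_pos hpos)) (Nat.cast_le.2 hle)
      _ = n * log n := by rw [Nat.cast_pow, log_pow]
  have htheta : ∑ p ∈ n.primesLE, log p ≤ log 4 * n :=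
    (Chebyshev.theta_eq_sum_primesLE_log n).symm.trans_le (Chebyshev.theta_le_log4_mul_x hn₀.le)
  have hfloor : ∀ p ∈ n.primesLE, n * (log p / p) ≤ (n / p : ℕ) * log p + log p := by
    intro p _
    have h := (Nat.lt_floor_add_one ((n : ℝ) / p)).le
    rw [Nat.floor_div_eq_div] at h
    calc n * (log p / p) = n / p * log p := by ring
      _ ≤ ((n / p : ℕ) + 1) * log p := by gcongr
      _ = (n / p : ℕ) * log p + log p := by ring
  refine le_of_mul_le_mul_left ?_ hn₀
  calc n * ∑ p ∈ n.primesLE, log p / p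
      ≤ ∑ p ∈ n.primesLE, ((n / p : ℕ) * log p + log p) := by
        rw [mul_sum]
        exact sum_le_sum hfloor
    _ ≤ n * (log n + log 4) := by
        rw [sum_add_distrib]
        linarith

lemma sum_Icc_div_log_le {a : ℕ → ℝ} {c : ℝ} {m n : ℕ} (hm : 2 ≤ m) (hmn : m ≤ n)
    (ha : ∀ k ∈ Icc m n, ∑ i ∈ Icc m k, a i ≤ log k + c) :
    ∑ i ∈ Icc m n, a i / log i ≤ 1 + c / log m + log (log n / log m) := by
  have hlog : ∀ k, m ≤ k → 0 < log (k : ℝ) := fun k hk =>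
    log_pos (by exact_mod_cast hm.trans hk)
  have partial_summation : ∑ i ∈ Icc m n, a i / log i ≤ (∑ i ∈ Icc m n, a i) / log n +
      c * (1 / log m - 1 / log n) + log (log n / log m) := by
    induction n, hmn using Nat.le_induction with
    | base => simp [(hlog m le_rfl).ne']
    | succ n hn ih =>
      have hA := ha n (mem_Icc.2 ⟨hn, n.le_succ⟩)
      have ih := ih fun k hk => ha k (Icc_subset_Icc_right n.le_succ hk)
      have hx := hlog n hn
      have hy := hlog (n + 1) (hn.trans n.le_succ)
      have hxy : log (n : ℝ) ≤ log (n + 1 : ℕ) :=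
        log_le_log (Nat.cast_pos.2 (by omega)) (Nat.cast_le.2 n.le_succ)
      rw [sum_Icc_succ_top (hn.trans n.le_succ), sum_Icc_succ_top (hn.trans n.le_succ)]
      have hloglog := one_sub_inv_le_log_of_pos (div_pos hy hx)
      have hloglog_add : log (log (n + 1 : ℕ) / log m) =
          log (log (n + 1 : ℕ) / log n) + log (log n / log m) := by
        rw [← log_mul (by positivity) (div_pos hx (hlog m le_rfl)).ne']
        congr 1
        field_simp
      have hdiff : (∑ i ∈ Icc m n, a i) * (1 / log n - 1 / log (n + 1 : ℕ)) ≤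
          (log n + c) * (1 / log n - 1 / log (n + 1 : ℕ)) :=
        mul_le_mul_of_nonneg_right hA (sub_nonneg.2 (one_div_le_one_div_of_le hx hxy))
      have hone : log n * (1 / log n - 1 / log (n + 1 : ℕ)) =
          1 - (log (n + 1 : ℕ) / log n)⁻¹ := by field_simp
      linear_combination ih + hdiff + hloglog + hone - hloglog_add
  have hn := hlog n hmn
  calc ∑ i ∈ Icc m n, a i / log i
      ≤ (log n + c) / log n + c * (1 / log m - 1 / log n) + log (log n / log m) := by
        grw [partial_summation, ha n (right_mem_Icc.2 hmn)]
    _ = 1 + c / log m + log (log n / log m) := by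
        field_simp
        ring

lemma sum_primes_Icc_one_div_le {m n : ℕ} (hm : 2 ≤ m) (hmn : m ≤ n) :
    ∑ p ∈ Icc m n with p.Prime, (1 : ℝ) / p ≤ 3 + log (log n / log m) := by
  have hlog : log 2 ≤ log m := log_le_log two_pos (by exact_mod_cast hm)
  have hlog_pos : 0 < log (m : ℝ) := (log_pos one_lt_two).trans_le hlog
  have hfour : log 4 / log m ≤ 2 := by
    rw [div_le_iff₀ hlog_pos, show (4 : ℝ) = 2 ^ 2 by norm_num, log_pow]
    push_cast
    linarith
  calc ∑ p ∈ Icc m n with p.Prime, (1 : ℝ) / p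
      = ∑ i ∈ Icc m n, (if i.Prime then log i / i else 0) / log i := by
        rw [sum_filter]
        refine sum_congr rfl fun i _ => ?_
        split_ifs with hp
        · have : log (i : ℝ) ≠ 0 := (log_pos (by exact_mod_cast hp.one_lt)).ne'
          field_simp
        · rw [zero_div]
    _ ≤ 1 + log 4 / log m + log (log n / log m) := by
        refine sum_Icc_div_log_le hm hmn fun k hk => ?_
        rw [← sum_filter]
        refine le_trans (sum_le_sum_of_subset_of_nonneg (fun p hp => ?_) fun p _ _ => ?_)
          (sum_primesLE_log_div_le (by have := (mem_Icc.1 hk).1; omega))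
        · rw [mem_filter, mem_Icc] at hp
          exact Nat.mem_primesLE.2 ⟨hp.1.2, hp.2⟩
        · have := log_natCast_nonneg p
          positivity
    _ ≤ 3 + log (log n / log m) := by linarith

/-- The primes less than a real number `z`. -/
noncomputable def primesLT (z : ℝ) : Finset ℕ := ⌈z⌉₊.primesBelow

lemma mem_primesLT {z : ℝ} {p : ℕ} : p ∈ primesLT z ↔ p.Prime ∧ (p : ℝ) < z := by
  rw [primesLT, Nat.mem_primesBelow, Nat.lt_ceil, and_comm]

lemma prime_of_mem_primesLT {z : ℝ} {p : ℕ} (hp : p ∈ primesLT z) : p.Prime :=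
  (mem_primesLT.1 hp).1

lemma primesLT_filter_lt {z : ℝ} {p : ℕ} (hp : p ∈ primesLT z) :
    {q ∈ primesLT z | q < p} = primesLT p := by
  ext q
  simp only [mem_filter, mem_primesLT, Nat.cast_lt]
  have hpz := (mem_primesLT.1 hp).2
  exact ⟨fun h => ⟨h.1.1, h.2⟩, fun h => ⟨⟨h.1, (Nat.cast_lt.2 h.2).trans hpz⟩, h.2⟩⟩

lemma sum_primesLT_log_div_log_div_le {z : ℝ} (hz : 1 < z) :
    ∑ p ∈ primesLT z, log p / log z / p ≤ 3 := by
  obtain hempty | ⟨p, hp⟩ := (primesLT z).eq_empty_or_nonempty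
  · rw [hempty, sum_empty]
    exact zero_le_three
  have hz₂ : 2 ≤ z := le_trans (by exact_mod_cast (prime_of_mem_primesLT hp).two_le)
    (mem_primesLT.1 hp).2.le
  have hceil : 1 < ⌈z⌉₊ := Nat.lt_ceil.2 (by exact_mod_cast hz)
  have hlog : 0 < log z := log_pos hz
  have hn : log (⌈z⌉₊ - 1 : ℕ) ≤ log z :=
    log_le_log (by exact_mod_cast Nat.sub_pos_of_lt hceil) (Nat.lt_ceil.1 (by omega)).le
  have hfour : log 4 ≤ 2 * log z := by
    rw [show (4 : ℝ) = 2 ^ 2 by norm_num, log_pow]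
    gcongr
    norm_num
  calc ∑ p ∈ primesLT z, log p / log z / p
      = (∑ p ∈ (⌈z⌉₊ - 1).primesLE, log p / p) / log z := by
        rw [primesLT, Nat.primesBelow_eq_primesLE_sub_one, sum_div]
        exact sum_congr rfl fun p _ => div_right_comm _ _ _
    _ ≤ 3 := by
        rw [div_le_iff₀ hlog]
        linarith [sum_primesLE_log_div_le (Nat.sub_pos_of_lt hceil).ne']

lemma sum_one_div_sq_le_one {Q : Finset ℕ} (hQ : ∀ q ∈ Q, 1 < q) :
    ∑ q ∈ Q, (1 : ℝ) / q ^ 2 ≤ 1 := by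
  have hsub : Q ⊆ Ioo 1 (Q.sup id + 1) := fun q hq =>
    mem_Ioo.2 ⟨hQ q hq, Nat.lt_succ_of_le (le_sup (f := id) hq)⟩
  calc ∑ q ∈ Q, (1 : ℝ) / q ^ 2
      ≤ ∑ q ∈ Ioo 1 (Q.sup id + 1), ((q : ℝ) ^ 2)⁻¹ := by
        simp only [one_div]
        exact sum_le_sum_of_subset_of_nonneg hsub fun q _ _ => by positivity
    _ ≤ 2 / (1 + 1) := by exact_mod_cast sum_Ioo_inv_sq_le 1 (Q.sup id + 1)
    _ = 1 := by norm_num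

lemma log_le_prod_primesBelow {n : ℕ} (hn : n ≠ 0) :
    log n ≤ ∏ p ∈ n.primesBelow, (1 - 1 / (p : ℝ))⁻¹ := by
  let inv : ℕ →* ℝ := (invMonoidWithZeroHom (G₀ := ℝ)).toMonoidHom.comp (Nat.castRingHom ℝ)
  have hlt : ∀ {p : ℕ}, p.Prime → ‖inv p‖ < 1 := fun {p} hp => by
    change ‖(p : ℝ)⁻¹‖ < 1
    rw [norm_inv, norm_natCast]
    exact inv_lt_one_of_one_lt₀ (by exact_mod_cast hp.one_lt)
  obtain ⟨hsummable, hasSum⟩ :=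
    EulerProduct.summable_and_hasSum_smoothNumbers_prod_primesBelow_geometric hlt n
  obtain ⟨m, rfl⟩ := Nat.exists_eq_succ_of_ne_zero hn
  have hsmooth : ∀ k ∈ Icc 1 m, k ∈ (m + 1).smoothNumbers := fun k hk => by
    rw [mem_Icc] at hk
    exact Nat.mem_smoothNumbers_of_lt (by omega) (by omega)
  calc log (m + 1 : ℕ) ≤ ∑ k ∈ Icc 1 m, inv k := by
        have hharmonic := log_add_one_le_harmonic m
        rw [harmonic_eq_sum_Icc] at hharmonic
        push_cast at hharmonic ⊢
        exact hharmonic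
    _ = ∑ k ∈ (Icc 1 m).subtype (· ∈ (m + 1).smoothNumbers), inv k :=
        (sum_subtype_of_mem _ hsmooth).symm
    _ ≤ ∏ p ∈ (m + 1).primesBelow, (1 - inv p)⁻¹ := by
        rw [← hasSum.tsum_eq]
        exact hsummable.of_norm.sum_le_tsum _ fun k _ => inv_nonneg.2 (Nat.cast_nonneg _)
    _ = ∏ p ∈ (m + 1).primesBelow, (1 - 1 / (p : ℝ))⁻¹ := by
        simp only [one_div]
        rfl

lemma prod_primesLT_one_sub_add_sq_le {z : ℝ} (hz : 1 < z) :
    ∏ q ∈ primesLT z, (1 - 1 / (q : ℝ) + 1 / (q : ℝ) ^ 2) ≤ exp 2 / log z := by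
  have hlog : 0 < log z := log_pos hz
  have hhalf : ∀ q ∈ primesLT z, 1 / (q : ℝ) ≤ 1 / 2 := fun q hq =>
    one_div_le_one_div_of_le two_pos (by exact_mod_cast (prime_of_mem_primesLT hq).two_le)
  have hceil : ⌈z⌉₊ ≠ 0 := (Nat.ceil_pos.2 (one_pos.trans hz)).ne'
  have hmertens : ∏ q ∈ primesLT z, (1 - 1 / (q : ℝ)) ≤ 1 / log z := by
    have hle := (log_le_log (one_pos.trans hz) (Nat.le_ceil z)).trans
      (log_le_prod_primesBelow hceil)
    rw [prod_inv_distrib, ← one_div] at hle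
    exact (le_one_div hlog (one_div_pos.1 (hlog.trans_le hle))).1 hle
  have hfactor : ∀ q ∈ primesLT z, 1 - 1 / (q : ℝ) + 1 / (q : ℝ) ^ 2 ≤
      (1 - 1 / (q : ℝ)) * exp (2 * (1 / (q : ℝ) ^ 2)) := by
    intro q hq
    have ht := hhalf q hq
    rw [← one_div_pow]
    set t := 1 / (q : ℝ)
    nlinarith [add_one_le_exp (2 * t ^ 2), sq_nonneg t]
  calc ∏ q ∈ primesLT z, (1 - 1 / (q : ℝ) + 1 / (q : ℝ) ^ 2)
      ≤ ∏ q ∈ primesLT z, (1 - 1 / (q : ℝ)) * exp (2 * (1 / (q : ℝ) ^ 2)) :=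
        prod_le_prod (fun q hq => by
          have := hhalf q hq
          have : 0 ≤ 1 / (q : ℝ) ^ 2 := by positivity
          linarith) hfactor
    _ = (∏ q ∈ primesLT z, (1 - 1 / (q : ℝ))) *
          exp (2 * ∑ q ∈ primesLT z, 1 / (q : ℝ) ^ 2) := by
        rw [prod_mul_distrib, ← exp_sum, mul_sum]
    _ ≤ 1 / log z * exp (2 * 1) := by
        have hsq := sum_one_div_sq_le_one (Q := primesLT z) fun q hq =>
          (prime_of_mem_primesLT hq).one_lt
        gcongr
    _ = exp 2 / log z := by rw [mul_one, one_div_mul_eq_div]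

lemma prod_primesLT_one_add_le {z : ℝ} {p : ℕ} (hp : p ∈ primesLT z) (a : ℕ) {b : ℝ}
    (hb : 0 ≤ b) :
    ∏ q ∈ primesLT z with p < q, (1 + a / (q : ℝ) + b / (q : ℝ) ^ 2) ≤
      exp (3 * a + b) * (log z / log p) ^ a := by
  obtain ⟨hprime, hpz⟩ := mem_primesLT.1 hp
  have hlogp : 0 < log (p : ℝ) := log_pos (by exact_mod_cast hprime.one_lt)
  have hlogz : log (p : ℝ) < log z := log_lt_log (by exact_mod_cast hprime.pos) hpz
  have hpn : p ≤ ⌈z⌉₊ - 1 := Nat.le_sub_one_of_lt (Nat.lt_ceil.2 hpz)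
  have hsum : ∑ q ∈ primesLT z with p < q, 1 / (q : ℝ) ≤ 3 + log (log z / log p) := by
    have hn : (⌈z⌉₊ - 1 : ℕ) ≤ z := (Nat.lt_ceil.1 (by have := hprime.pos; omega)).le
    have hsub : {q ∈ primesLT z | p < q} ⊆ {q ∈ Icc p (⌈z⌉₊ - 1) | q.Prime} := fun q hq => by
      obtain ⟨⟨hq, hqz⟩, hpq⟩ := (mem_filter.1 hq).imp_left mem_primesLT.1
      exact mem_filter.2 ⟨mem_Icc.2 ⟨hpq.le, Nat.le_sub_one_of_lt (Nat.lt_ceil.2 hqz)⟩, hq⟩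
    have hlogn : log (p : ℝ) ≤ log (⌈z⌉₊ - 1 : ℕ) :=
      log_le_log (Nat.cast_pos.2 hprime.pos) (Nat.cast_le.2 hpn)
    calc ∑ q ∈ primesLT z with p < q, 1 / (q : ℝ)
        ≤ ∑ q ∈ Icc p (⌈z⌉₊ - 1) with q.Prime, 1 / (q : ℝ) :=
          sum_le_sum_of_subset_of_nonneg hsub fun q _ _ => by positivity
      _ ≤ 3 + log (log (⌈z⌉₊ - 1 : ℕ) / log p) := sum_primes_Icc_one_div_le hprime.two_le hpn
      _ ≤ 3 + log (log z / log p) := by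
          have hpos : 0 < log (⌈z⌉₊ - 1 : ℕ) := hlogp.trans_le hlogn
          have hpos' : (0 : ℝ) < (⌈z⌉₊ - 1 : ℕ) := Nat.cast_pos.2 (hprime.pos.trans_le hpn)
          gcongr
  have hsq : ∑ q ∈ primesLT z with p < q, 1 / (q : ℝ) ^ 2 ≤ 1 :=
    sum_one_div_sq_le_one fun q hq => (prime_of_mem_primesLT (mem_filter.1 hq).1).one_lt
  calc ∏ q ∈ primesLT z with p < q, (1 + a / (q : ℝ) + b / (q : ℝ) ^ 2)
      ≤ ∏ q ∈ primesLT z with p < q, exp (a * (1 / (q : ℝ)) + b * (1 / (q : ℝ) ^ 2)) := by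
        refine prod_le_prod (fun q _ => by positivity) fun q _ => ?_
        linarith [add_one_le_exp (a * (1 / (q : ℝ)) + b * (1 / (q : ℝ) ^ 2)),
          mul_one_div (a : ℝ) q, mul_one_div b ((q : ℝ) ^ 2)]
    _ = exp (a * (∑ q ∈ primesLT z with p < q, 1 / (q : ℝ)) +
          b * ∑ q ∈ primesLT z with p < q, 1 / (q : ℝ) ^ 2) := by
        rw [← exp_sum, sum_add_distrib, mul_sum, mul_sum]
    _ ≤ exp (a * (3 + log (log z / log p)) + b * 1) := by gcongr
    _ = exp (3 * a + b) * (log z / log p) ^ a := by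
        rw [← exp_log (pow_pos (div_pos (hlogp.trans hlogz) hlogp) a), log_pow, ← exp_add]
        ring_nf

/-! ### Sums over subsets -/

section Subsets

variable {α R : Type*} [DecidableEq α] [CommSemiring R]

lemma sum_Icc_prod {S P : Finset α} (hS : S ⊆ P) (f : α → R) :
    ∑ M ∈ Icc S P, ∏ q ∈ M, f q = (∏ q ∈ S, f q) * ∏ q ∈ P \ S, (1 + f q) := by
  have hdisj : ∀ B ∈ (P \ S).powerset, Disjoint S B := fun B hB =>
    disjoint_sdiff.mono_right (mem_powerset.1 hB)
  rw [Icc_eq_image_powerset hS, sum_image, prod_one_add, mul_sum]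
  · exact sum_congr rfl fun B hB => prod_union (hdisj B hB)
  · intro B hB C hC hBC
    rw [← union_sdiff_cancel_left (hdisj B hB), ← union_sdiff_cancel_left (hdisj C hC)]
    exact congrArg (· \ S) hBC

lemma sum_powerset_prod_mul_sq (Q : Finset α) (a b c : α → R) :
    ∑ B ∈ Q.powerset, (∏ q ∈ B, c q) * ((∏ q ∈ B, a q) * ∏ q ∈ Q \ B, b q) ^ 2 =
      ∏ q ∈ Q, (c q * a q ^ 2 + b q ^ 2) := by
  rw [prod_add]
  refine sum_congr rfl fun B _ => ?_
  rw [prod_mul_distrib, prod_pow, prod_pow]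
  ring

end Subsets

section LinearOrder

variable {α R : Type*} [LinearOrder α]

lemma sum_Icc_filter_mem [AddCommMonoid R] {S P : Finset α} {p : α} (hp : p ∈ P)
    (G : Finset α → Finset α → R) :
    ∑ M ∈ Icc S P with p ∈ M, G {q ∈ M | q < p} {q ∈ M | p < q} =
      ∑ A ∈ Icc {q ∈ S | q < p} {q ∈ P | q < p},
        ∑ B ∈ Icc {q ∈ S | p < q} {q ∈ P | p < q}, G A B := by
  rw [← sum_product']
  refine sum_nbij' (fun M => ({q ∈ M | q < p}, {q ∈ M | p < q}))
    (fun AB => insert p (AB.1 ∪ AB.2)) ?_ ?_ ?_ ?_ fun _ _ => rfl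
  · intro M hM
    simp only [mem_filter, mem_Icc, mem_product] at hM ⊢
    grind
  · intro AB h
    simp only [mem_filter, mem_Icc, mem_product] at h ⊢
    grind
  · intro M hM
    simp only [mem_filter, mem_Icc] at hM
    grind
  · intro AB h
    simp only [mem_Icc, mem_product] at h
    ext <;> grind

lemma sum_powerset_split [NonAssocSemiring R] {P : Finset α} {p : α} (hp : p ∈ P)
    (G : Finset α → Finset α → R) :
    ∑ S ∈ P.powerset, G {q ∈ S | q < p} {q ∈ S | p < q} =
      2 * ∑ A ∈ powerset {q ∈ P | q < p}, ∑ B ∈ powerset {q ∈ P | p < q}, G A B := by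
  have hmem := sum_Icc_filter_mem (S := ∅) hp G
  have hIcc : ∀ Q : Finset α, Icc ∅ Q = Q.powerset := fun Q => Icc_bot.trans (Iic_eq_powerset Q)
  simp only [filter_empty, hIcc] at hmem
  have hnotMem : ∑ S ∈ P.powerset with p ∉ S, G {q ∈ S | q < p} {q ∈ S | p < q} =
      ∑ S ∈ P.powerset with p ∈ S, G {q ∈ S | q < p} {q ∈ S | p < q} := by
    refine sum_nbij' (insert p) (erase · p) ?_ ?_ ?_ ?_ ?_ <;> intro S hS <;>
      simp only [mem_filter, mem_powerset] at hS ⊢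
    · exact ⟨insert_subset hp hS.1, mem_insert_self p S⟩
    · exact ⟨(erase_subset p S).trans hS.1, notMem_erase p S⟩
    · exact erase_insert hS.2
    · exact insert_erase hS.2
    · rw [filter_insert, filter_insert, if_neg (lt_irrefl p), if_neg (lt_irrefl p)]
  rw [← sum_filter_add_sum_filter_not _ (p ∈ ·), hnotMem, hmem, two_mul]

lemma sum_half_pow_card_lt (S : Finset α) :
    ∑ p ∈ S, (1 / 2 : ℝ) ^ #{q ∈ S | p < q} = 2 - 2 * (1 / 2) ^ #S := by
  induction S using Finset.induction_on_min with
  | empty => simp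
  | insert a S hlt ih =>
    have ha : a ∉ S := fun h => lt_irrefl a (hlt a h)
    have hcard : ∀ p ∈ S, #{q ∈ insert a S | p < q} = #{q ∈ S | p < q} := fun p hp => by
      rw [filter_insert, if_neg (hlt p hp).not_gt]
    rw [sum_insert ha, sum_congr rfl fun p hp => by rw [hcard p hp], ih, filter_insert,
      if_neg (lt_irrefl a), filter_true_of_mem hlt, card_insert_of_notMem ha]
    ring

end LinearOrder

section LinearOrder

variable {α : Type*} [LinearOrder α]

lemma filter_le_eq_insert {M : Finset α} {q : α} (hq : q ∈ M) :
    {r ∈ M | q ≤ r} = insert q {r ∈ M | q < r} := by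
  ext r
  grind

lemma prod_split {R : Type*} [CommMonoid R] {M : Finset α} {p : α} (hp : p ∈ M) (f : α → R) :
    ∏ q ∈ M, f q = (∏ q ∈ M with q < p, f q) * f p * ∏ q ∈ M with p < q, f q := by
  rw [← prod_filter_mul_prod_filter_not M (· < p), mul_assoc]
  simp only [not_lt]
  rw [filter_le_eq_insert hp, prod_insert fun h => lt_irrefl p (mem_filter.1 h).2]

lemma exists_filter_lt_eq_insert {M : Finset α} {p : α} (h : {r ∈ M | p < r}.Nonempty) :
    ∃ q ∈ M, p < q ∧ {r ∈ M | p < r} = insert q {r ∈ M | q < r} := by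
  obtain ⟨q, hq, hmin⟩ := exists_min_image _ id h
  refine ⟨q, (mem_filter.1 hq).1, (mem_filter.1 hq).2, ?_⟩
  ext r
  grind

end LinearOrder

/-! ### The β-sieve conditions -/

/-- The parity of the number of factors for which the β-sieve imposes its condition: odd numbers
for the upper bound sieve (`o = true`), even numbers for the lower bound sieve. -/
def HasParity (o : Bool) (n : ℕ) : Prop := if o then Odd n else Even n

/-- For a set `M = {p₁ > ⋯ > p_r}` of primes and `q = p_m`, the β-sieve condition
`p₁⋯p_m·p_m ^ β < E`, imposed only if `m` has parity `o`. -/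
def SieveCondition (β : ℕ) (E : ℝ) (o : Bool) (M : Finset ℕ) (q : ℕ) : Prop :=
  HasParity o #{r ∈ M | q ≤ r} → (∏ r ∈ M with q ≤ r, (r : ℝ)) * (q : ℝ) ^ β < E

/-- The β-sieve weight of `∏ q ∈ M, q` is nonzero: every element of `M` satisfies its condition. -/
def IsAdmissible (β : ℕ) (E : ℝ) (o : Bool) (M : Finset ℕ) : Prop :=
  ∀ q ∈ M, SieveCondition β E o M q

/-- `p` is the largest element of `M` at which the β-sieve condition fails. -/
def IsFirstFailure (β : ℕ) (E : ℝ) (o : Bool) (M : Finset ℕ) (p : ℕ) : Prop :=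
  p ∈ M ∧ ¬ SieveCondition β E o M p ∧ ∀ q ∈ M, p < q → SieveCondition β E o M q

/-- The logarithm of the level that remains of `E` after dividing by the elements of `M`
exceeding `q`. -/
noncomputable def residualLog (E : ℝ) (M : Finset ℕ) (q : ℕ) : ℝ :=
  log E - ∑ r ∈ M with q < r, log r

section SieveCondition

variable {β : ℕ} {E z s : ℝ} {o : Bool} {M : Finset ℕ} {p q : ℕ}

lemma hasParity_add_two (o : Bool) (n : ℕ) : HasParity o (n + 2) ↔ HasParity o n := by
  cases o <;> simp [HasParity, parity_simps]

lemma sieveCondition_iff_residualLog (hE : 0 < E) (hM : ∀ r ∈ M, 0 < r) (hq : q ∈ M) :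
    SieveCondition β E o M q ↔
      (HasParity o (#{r ∈ M | q < r} + 1) → (β + 1) * log q < residualLog E M q) := by
  have hqM : q ∉ {r ∈ M | q < r} := fun h => lt_irrefl q (mem_filter.1 h).2
  have hpos : ∀ r ∈ M, (0 : ℝ) < r := fun r hr => Nat.cast_pos.2 (hM r hr)
  have hprod : 0 < ∏ r ∈ M with q < r, (r : ℝ) := prod_pos fun r hr => hpos r (mem_filter.1 hr).1
  have hq₀ := hpos q hq
  rw [SieveCondition, filter_le_eq_insert hq, card_insert_of_notMem hqM, prod_insert hqM,
    ← log_lt_log_iff (by positivity) hE, log_mul (by positivity) (by positivity),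
    log_mul hq₀.ne' hprod.ne', log_pow, log_prod fun r hr => (hpos r (mem_filter.1 hr).1).ne',
    residualLog, lt_sub_iff_add_lt]
  ring_nf

lemma exists_residualLog_eq_sub_log (h : #{r ∈ M | p < r} ≠ 0) :
    ∃ q ∈ M, p < q ∧ #{r ∈ M | p < r} = #{r ∈ M | q < r} + 1 ∧
      residualLog E M p = residualLog E M q - log q := by
  obtain ⟨q, hq, hpq, hinsert⟩ := exists_filter_lt_eq_insert (card_ne_zero.1 h)
  have hqM : q ∉ {r ∈ M | q < r} := fun h => lt_irrefl q (mem_filter.1 h).2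
  refine ⟨q, hq, hpq, by rw [hinsert, card_insert_of_notMem hqM], ?_⟩
  rw [residualLog, residualLog, hinsert, sum_insert hqM]
  ring

lemma exists_residualLog_sub_two_mul_log_le (hM : ∀ r ∈ M, 0 < r) (h : 2 ≤ #{r ∈ M | p < r}) :
    ∃ r ∈ M, p < r ∧ #{t ∈ M | p < t} = #{t ∈ M | r < t} + 2 ∧
      residualLog E M r - 2 * log r ≤ residualLog E M p := by
  obtain ⟨q, hq, hpq, hcardq, hresp⟩ :=
    exists_residualLog_eq_sub_log (E := E) (M := M) (p := p) (by omega)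
  obtain ⟨r, hr, hqr, hcardr, hresq⟩ :=
    exists_residualLog_eq_sub_log (E := E) (M := M) (p := q) (by omega)
  have hlog : log q ≤ log r := log_le_log (Nat.cast_pos.2 (hM q hq)) (Nat.cast_le.2 hqr.le)
  exact ⟨r, hr, hpq.trans hqr, by omega, by linarith⟩

lemma residualLog_ge (hβ : 1 ≤ β) (hz : 1 < z) (hzE : z ^ s ≤ E)
    (hM : ∀ r ∈ M, 0 < r ∧ (r : ℝ) ≤ z) (n : ℕ) :
    ∀ p : ℕ, #{r ∈ M | p < r} = n → (∀ q ∈ M, p < q → SieveCondition β E o M q) →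
      HasParity o (n + 1) →
      (s - 1) * log z * (1 - 2 / (β + 1) : ℝ) ^ (n / 2) ≤ residualLog E M p := by
  have hz₀ : 0 < z := one_pos.trans hz
  have hlog : 0 < log z := log_pos hz
  have hlogE : s * log z ≤ log E := log_rpow hz₀ s ▸ log_le_log (rpow_pos_of_pos hz₀ s) hzE
  induction n using Nat.twoStepInduction with
  | zero =>
    intro p hcard _ _
    rw [residualLog, card_eq_zero.1 hcard, sum_empty, Nat.zero_div, pow_zero]
    linarith
  | one =>
    intro p hcard _ _
    obtain ⟨q, hq, -, hcardq, hres⟩ :=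
      exists_residualLog_eq_sub_log (E := E) (hcard.trans_ne one_ne_zero)
    have hlogq : log q ≤ log z := log_le_log (Nat.cast_pos.2 (hM q hq).1) (hM q hq).2
    rw [hres, residualLog, card_eq_zero.1 (by omega : #{r ∈ M | q < r} = 0), sum_empty,
      Nat.div_eq_of_lt one_lt_two, pow_zero]
    linarith
  | more n ih _ =>
    intro p hcard hcond hpar
    have hpar : HasParity o (n + 1) := (hasParity_add_two o (n + 1)).1 hpar
    obtain ⟨r, hr, hpr, hcardr, hres⟩ := exists_residualLog_sub_two_mul_log_le (E := E)
      (fun t ht => (hM t ht).1) (hcard.symm ▸ Nat.le_add_left 2 n)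
    obtain rfl : #{t ∈ M | r < t} = n := by omega
    have ih := ih r rfl (fun t ht hrt => hcond t ht (hpr.trans hrt)) hpar
    have hlogr := (sieveCondition_iff_residualLog ((rpow_pos_of_pos hz₀ s).trans_le hzE)
      (fun t ht => (hM t ht).1) hr).1 (hcond r hr hpr) hpar
    have hratio : (0 : ℝ) ≤ 1 - 2 / (β + 1) := by
      rw [sub_nonneg, div_le_one (by positivity)]
      exact_mod_cast Nat.succ_le_succ hβ
    set n := #{t ∈ M | r < t}
    calc (s - 1) * log z * (1 - 2 / (β + 1) : ℝ) ^ ((n + 2) / 2)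
        = (s - 1) * log z * (1 - 2 / (β + 1) : ℝ) ^ (n / 2) * (1 - 2 / (β + 1)) := by
          rw [Nat.add_div_right n two_pos, pow_succ, ← mul_assoc]
      _ ≤ residualLog E M r * (1 - 2 / (β + 1)) := by gcongr
      _ = residualLog E M r - 2 * (residualLog E M r / (β + 1)) := by ring
      _ ≤ residualLog E M r - 2 * log r := by
          gcongr
          rw [le_div_iff₀' (by positivity)]
          exact hlogr.le
      _ ≤ residualLog E M p := hres

lemma IsFirstFailure.le_log_div_log (hβ : 1 ≤ β) (hz : 1 < z) (hzE : z ^ s ≤ E)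
    (hM : M ⊆ primesLT z) (h : IsFirstFailure β E o M p) :
    (s - 1) / (β + 1) * (1 - 2 / (β + 1)) ^ (#{q ∈ M | p < q} / 2) ≤ log p / log z := by
  have hM' : ∀ r ∈ M, 0 < r ∧ (r : ℝ) ≤ z := fun r hr =>
    ⟨(prime_of_mem_primesLT (hM hr)).pos, (mem_primesLT.1 (hM hr)).2.le⟩
  have hE : 0 < E := (rpow_pos_of_pos (one_pos.trans hz) s).trans_le hzE
  obtain ⟨hp, hfail, habove⟩ := h
  rw [sieveCondition_iff_residualLog hE (fun r hr => (hM' r hr).1) hp, Classical.not_imp,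
    not_lt] at hfail
  have hres := (residualLog_ge hβ hz hzE hM' _ p rfl habove hfail.1).trans hfail.2
  rw [le_div_iff₀ (log_pos hz), div_mul_eq_mul_div, div_mul_eq_mul_div,
    div_le_iff₀' (by positivity)]
  linarith

lemma IsFirstFailure.pow_le (hβ : 12 ≤ β) (hz : 1 < z) (hs : 1 ≤ s)
    (hzE : z ^ s ≤ E) (hM : M ⊆ primesLT z) (h : IsFirstFailure β E o M p) :
    ((s - 1) / (β + 1)) ^ 8 ≤ 2 ^ #{q ∈ M | p < q} * (log p / log z) ^ 8 := by
  set n := #{q ∈ M | p < q}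
  have hratio : (11 / 13 : ℝ) ≤ 1 - 2 / (β + 1) := by
    have : (12 : ℝ) ≤ β := by exact_mod_cast hβ
    rw [le_sub_comm, div_le_iff₀ (by positivity)]
    linarith
  have hfour : (1 / 4 : ℝ) ≤ (1 - 2 / (β + 1)) ^ 8 :=
    le_trans (by norm_num) (pow_le_pow_left₀ (by norm_num) hratio 8)
  have hκ : 0 ≤ (s - 1) / (β + 1) := div_nonneg (sub_nonneg.2 hs) (by positivity)
  have hpow := pow_le_pow_left₀ (mul_nonneg hκ (pow_nonneg (le_trans (by norm_num) hratio) _))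
    (h.le_log_div_log (by omega) hz hzE hM) 8
  have hhalf : (1 / 2 : ℝ) ^ n ≤ ((1 - 2 / (β + 1)) ^ (n / 2)) ^ 8 := by
    calc (1 / 2 : ℝ) ^ n ≤ (1 / 2) ^ (2 * (n / 2)) :=
          pow_le_pow_of_le_one (by norm_num) (by norm_num) (Nat.mul_div_le n 2)
      _ = (1 / 4) ^ (n / 2) := by rw [pow_mul]; norm_num
      _ ≤ ((1 - 2 / (β + 1)) ^ 8) ^ (n / 2) := by gcongr
      _ = ((1 - 2 / (β + 1)) ^ (n / 2)) ^ 8 := pow_right_comm _ _ _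
  calc ((s - 1) / (β + 1)) ^ 8
      = 2 ^ n * (((s - 1) / (β + 1)) ^ 8 * (1 / 2) ^ n) := by
        rw [mul_left_comm, ← mul_pow]
        norm_num
    _ ≤ 2 ^ n * (((s - 1) / (β + 1)) ^ 8 * ((1 - 2 / (β + 1)) ^ (n / 2)) ^ 8) := by gcongr
    _ ≤ 2 ^ n * (log p / log z) ^ 8 := by
        rw [← mul_pow]
        gcongr

end SieveCondition

/-! ### Möbius sums over intervals of sets of primes -/

/-- The sum of `μ(m) / m` over the integers `m = ∏ q ∈ M, q` where the set `M` of primes satisfies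
`S ⊆ M ⊆ P` and the property `Q`. -/
noncomputable def moebiusSum (Q : Finset ℕ → Prop) (S P : Finset ℕ) : ℝ :=
  ∑ M ∈ Icc S P with Q M, ∏ q ∈ M, (-1 / (q : ℝ))

section MoebiusSum

variable {β : ℕ} {E : ℝ} {o : Bool} {M P S : Finset ℕ} {p : ℕ}

lemma isFirstFailure_iff_insert_filter (hp : p ∈ M) :
    IsFirstFailure β E o M p ↔ IsFirstFailure β E o (insert p {q ∈ M | p < q}) p := by
  have hcongr : ∀ q, p ≤ q →
      (SieveCondition β E o M q ↔ SieveCondition β E o (insert p {q ∈ M | p < q}) q) := by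
    intro q hpq
    have hfilter : {r ∈ M | q ≤ r} = {r ∈ insert p {q ∈ M | p < q} | q ≤ r} := by
      ext r
      grind
    rw [SieveCondition, SieveCondition, hfilter]
  have habove : (∀ q ∈ M, p < q → SieveCondition β E o M q) ↔
      ∀ q ∈ insert p {q ∈ M | p < q}, p < q →
        SieveCondition β E o (insert p {q ∈ M | p < q}) q := by
    grind
  rw [IsFirstFailure, IsFirstFailure, hcongr p le_rfl, habove]
  simp only [hp, mem_insert_self]

lemma exists_isFirstFailure (h : ¬ IsAdmissible β E o M) : ∃ p, IsFirstFailure β E o M p := by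
  simp only [IsAdmissible, not_forall] at h
  obtain ⟨q, hq, hfail⟩ := h
  obtain ⟨p, hp, hmax⟩ := exists_max_image {q ∈ M | ¬ SieveCondition β E o M q} id
    ⟨q, mem_filter.2 ⟨hq, hfail⟩⟩
  refine ⟨p, (mem_filter.1 hp).1, (mem_filter.1 hp).2, fun r hr hpr => ?_⟩
  by_contra hfail
  exact (hmax r (mem_filter.2 ⟨hr, hfail⟩)).not_gt hpr

lemma IsFirstFailure.unique {p' : ℕ} (h : IsFirstFailure β E o M p)
    (h' : IsFirstFailure β E o M p') : p = p' := by
  by_contra hne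
  rcases lt_or_gt_of_ne hne with hlt | hlt
  · exact h'.2.1 (h.2.2 p' h'.1 hlt)
  · exact h.2.1 (h'.2.2 p h.1 hlt)

lemma moebiusSum_isAdmissible :
    moebiusSum (IsAdmissible β E o) S P = moebiusSum (fun _ => True) S P -
      ∑ p ∈ P, moebiusSum (IsFirstFailure β E o · p) S P := by
  simp only [moebiusSum, sum_filter]
  rw [sum_comm, ← sum_sub_distrib]
  refine sum_congr rfl fun M hM => ?_
  rw [if_pos trivial]
  by_cases h : IsAdmissible β E o M
  · rw [if_pos h, sum_eq_zero fun p _ => if_neg fun hp => hp.2.1 (h p hp.1), sub_zero]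
  · obtain ⟨p, hp⟩ := exists_isFirstFailure h
    rw [if_neg h, sum_eq_single_of_mem p ((mem_Icc.1 hM).2 hp.1)
      fun p' _ hne => if_neg fun hp' => hne (hp'.unique hp), if_pos hp, sub_self]

lemma moebiusSum_isFirstFailure (hp : p ∈ P) :
    moebiusSum (IsFirstFailure β E o · p) S P =
      moebiusSum (fun _ => True) {q ∈ S | q < p} {q ∈ P | q < p} * (-1 / (p : ℝ)) *
        moebiusSum (fun B => IsFirstFailure β E o (insert p B) p)
          {q ∈ S | p < q} {q ∈ P | p < q} := by
  calc moebiusSum (IsFirstFailure β E o · p) S P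
      = ∑ M ∈ Icc S P with p ∈ M,
          if IsFirstFailure β E o (insert p {q ∈ M | p < q}) p then
            (∏ q ∈ M with q < p, (-1 / (q : ℝ))) * (-1 / (p : ℝ)) *
              ∏ q ∈ M with p < q, (-1 / (q : ℝ)) else 0 := by
        rw [moebiusSum, sum_filter, sum_filter]
        refine sum_congr rfl fun M _ => ?_
        by_cases hpM : p ∈ M
        · rw [if_pos hpM, prod_split hpM, isFirstFailure_iff_insert_filter hpM]
        · rw [if_neg hpM, if_neg fun h => hpM h.1]
    _ = _ := by
        rw [sum_Icc_filter_mem hp fun A B => if IsFirstFailure β E o (insert p B) p then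
            (∏ q ∈ A, (-1 / (q : ℝ))) * (-1 / (p : ℝ)) * ∏ q ∈ B, (-1 / (q : ℝ)) else 0]
        rw [moebiusSum, moebiusSum, filter_true, sum_filter, sum_mul, sum_mul_sum]
        simp only [mul_ite, mul_zero]

lemma moebiusSum_true (hS : S ⊆ P) : moebiusSum (fun _ => True) S P =
    (∏ q ∈ S, (-1 / (q : ℝ))) * ∏ q ∈ P \ S, (1 + -1 / (q : ℝ)) := by
  rw [moebiusSum, filter_true, sum_Icc_prod hS]

lemma sum_prod_mul_moebiusSum_true_sq (hP : 0 ∉ P) :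
    ∑ S ∈ P.powerset, (∏ q ∈ S, (q : ℝ)) * moebiusSum (fun _ => True) S P ^ 2 =
      ∏ q ∈ P, (1 - 1 / (q : ℝ) + 1 / (q : ℝ) ^ 2) := by
  calc ∑ S ∈ P.powerset, (∏ q ∈ S, (q : ℝ)) * moebiusSum (fun _ => True) S P ^ 2
      = ∏ q ∈ P, ((q : ℝ) * (-1 / (q : ℝ)) ^ 2 + (1 + -1 / (q : ℝ)) ^ 2) := by
        rw [← sum_powerset_prod_mul_sq]
        exact sum_congr rfl fun S hS => by rw [moebiusSum_true (mem_powerset.1 hS)]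
    _ = ∏ q ∈ P, (1 - 1 / (q : ℝ) + 1 / (q : ℝ) ^ 2) := by
        refine prod_congr rfl fun q hq => ?_
        have hq₀ : (q : ℝ) ≠ 0 := Nat.cast_ne_zero.2 fun h => hP (h ▸ hq)
        field_simp
        ring

lemma abs_moebiusSum_le {Q : Finset ℕ → Prop} {c : ℝ} (hS : S ⊆ P) (hc : 0 ≤ c)
    (hQ : ∀ M ∈ Icc S P, Q M → 1 ≤ c * 2 ^ #M) :
    |moebiusSum Q S P| ≤ c * ((∏ q ∈ S, 2 / (q : ℝ)) * ∏ q ∈ P \ S, (1 + 2 / (q : ℝ))) := by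
  rw [← sum_Icc_prod hS, mul_sum, moebiusSum, sum_filter]
  refine (abs_sum_le_sum_abs _ _).trans (sum_le_sum fun M hM => ?_)
  have hprod : ∏ q ∈ M, 2 / (q : ℝ) = 2 ^ #M * ∏ q ∈ M, 1 / (q : ℝ) := by
    rw [← prod_const, ← prod_mul_distrib]
    simp only [mul_one_div]
  have hpos : 0 ≤ ∏ q ∈ M, 1 / (q : ℝ) := prod_nonneg fun q _ => by positivity
  split_ifs with h
  · rw [abs_prod, hprod, ← mul_assoc]
    simp only [abs_div, abs_neg, abs_one, Nat.abs_cast]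
    exact le_mul_of_one_le_left hpos (hQ M hM h)
  · rw [abs_zero, hprod]
    positivity

lemma sum_prod_mul_two_pow_mul_moebiusSum_sq_le {Q : Finset ℕ → Prop} {c : ℝ} (hP : 0 ∉ P)
    (hc : 0 ≤ c) (hQ : ∀ M ⊆ P, Q M → 1 ≤ c * 2 ^ #M) :
    ∑ S ∈ P.powerset, (∏ q ∈ S, (q : ℝ)) * 2 ^ #S * moebiusSum Q S P ^ 2 ≤
      c ^ 2 * ∏ q ∈ P, (1 + 12 / (q : ℝ) + 4 / (q : ℝ) ^ 2) := by
  calc ∑ S ∈ P.powerset, (∏ q ∈ S, (q : ℝ)) * 2 ^ #S * moebiusSum Q S P ^ 2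
      ≤ ∑ S ∈ P.powerset, (∏ q ∈ S, (q : ℝ)) * 2 ^ #S *
          (c * ((∏ q ∈ S, 2 / (q : ℝ)) * ∏ q ∈ P \ S, (1 + 2 / (q : ℝ)))) ^ 2 := by
        refine sum_le_sum fun S hS => ?_
        have habs := abs_moebiusSum_le (mem_powerset.1 hS) hc
          fun M hM => hQ M (mem_Icc.1 hM).2
        have : 0 ≤ ∏ q ∈ S, (q : ℝ) := prod_nonneg fun q _ => by positivity
        gcongr ?_ * ?_
        exact sq_le_sq' (neg_le_of_abs_le habs) (le_of_abs_le habs)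
    _ = c ^ 2 * ∑ S ∈ P.powerset, (∏ q ∈ S, (q * 2 : ℝ)) *
          ((∏ q ∈ S, 2 / (q : ℝ)) * ∏ q ∈ P \ S, (1 + 2 / (q : ℝ))) ^ 2 := by
        rw [mul_sum]
        refine sum_congr rfl fun S _ => ?_
        rw [prod_mul_distrib, prod_const]
        ring
    _ = c ^ 2 * ∏ q ∈ P, (1 + 12 / (q : ℝ) + 4 / (q : ℝ) ^ 2) := by
        rw [sum_powerset_prod_mul_sq]
        congr 1
        refine prod_congr rfl fun q hq => ?_
        have hq₀ : (q : ℝ) ≠ 0 := Nat.cast_ne_zero.2 fun h => hP (h ▸ hq)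
        field_simp
        ring

end MoebiusSum

/-! ### The mean square -/

/-- The weights of the Cauchy–Schwarz inequality applied to the sum over the first failure `p`. The
last factor makes `(∏ q ∈ S, q) / failureWeight z S p` independent of whether `p ∈ S`, and the
power of `1 / 2` makes the weights of the `p ∈ S` summable. -/
noncomputable def failureWeight (z : ℝ) (S : Finset ℕ) (p : ℕ) : ℝ :=
  log p / log z * (1 / 2) ^ #{q ∈ S | p < q} * if p ∈ S then 1 else 1 / (p : ℝ)

section MeanSquare

variable {β : ℕ} {z E s : ℝ} {o : Bool} {S : Finset ℕ} {p : ℕ}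

lemma log_div_log_pos (hz : 1 < z) (hp : p ∈ primesLT z) : 0 < log p / log z :=
  div_pos (log_pos (by exact_mod_cast (prime_of_mem_primesLT hp).one_lt)) (log_pos hz)

lemma log_div_log_le_one (hz : 1 < z) (hp : p ∈ primesLT z) : log p / log z ≤ 1 :=
  (div_le_one (log_pos hz)).2 (log_le_log (by exact_mod_cast (prime_of_mem_primesLT hp).pos)
    (mem_primesLT.1 hp).2.le)

lemma failureWeight_pos (hz : 1 < z) (hp : p ∈ primesLT z) : 0 < failureWeight z S p := by
  have hu := log_div_log_pos hz hp
  have hp₀ : (0 : ℝ) < p := by exact_mod_cast (prime_of_mem_primesLT hp).pos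
  rw [failureWeight]
  split_ifs <;> positivity

lemma sum_failureWeight_le (hz : 1 < z) (hS : S ⊆ primesLT z) :
    ∑ p ∈ primesLT z, failureWeight z S p ≤ 5 := by
  have hle : ∀ p ∈ primesLT z, failureWeight z S p ≤
      (if p ∈ S then (1 / 2 : ℝ) ^ #{q ∈ S | p < q} else 0) + log p / log z / p := by
    intro p hp
    have hu := (log_div_log_pos hz hp).le
    have hpow : (1 / 2 : ℝ) ^ #{q ∈ S | p < q} ≤ 1 := pow_le_one₀ (by norm_num) (by norm_num)
    rw [failureWeight]
    split_ifs
    · rw [mul_one]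
      exact (mul_le_of_le_one_left (by positivity) (log_div_log_le_one hz hp)).trans
        (le_add_of_nonneg_right (by positivity))
    · rw [mul_one_div, zero_add]
      gcongr
      exact mul_le_of_le_one_right hu hpow
  calc ∑ p ∈ primesLT z, failureWeight z S p
      ≤ ∑ p ∈ S, (1 / 2 : ℝ) ^ #{q ∈ S | p < q} + ∑ p ∈ primesLT z, log p / log z / p := by
        grw [sum_le_sum hle, sum_add_distrib, sum_ite_mem, inter_eq_right.2 hS]
    _ ≤ 2 + 3 := by
        grw [sum_half_pow_card_lt, sum_primesLT_log_div_log_div_le hz]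
        exact add_le_add_left (sub_le_self 2 (by positivity)) 3
    _ = 5 := by norm_num

lemma prod_div_failureWeight (hz : 1 < z) (hp : p ∈ primesLT z) :
    (∏ q ∈ S, (q : ℝ)) / failureWeight z S p = p / (log p / log z) *
      ((∏ q ∈ S with q < p, (q : ℝ)) *
        ((∏ q ∈ S with p < q, (q : ℝ)) * 2 ^ #{q ∈ S | p < q})) := by
  have hu := log_div_log_pos hz hp
  have hp₀ : (0 : ℝ) < p := by exact_mod_cast (prime_of_mem_primesLT hp).pos
  have hprod : ∏ q ∈ S, (q : ℝ) = (if p ∈ S then 1 else 1 / (p : ℝ)) *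
      ((∏ q ∈ S with q < p, (q : ℝ)) * p * ∏ q ∈ S with p < q, (q : ℝ)) := by
    split_ifs with h
    · rw [one_mul, ← prod_split h]
    · have hinsert := prod_split (mem_insert_self p S) (fun q => (q : ℝ))
      rw [prod_insert h, filter_insert, filter_insert, if_neg (lt_irrefl p),
        if_neg (lt_irrefl p)] at hinsert
      rw [← hinsert]
      field_simp
  rw [div_eq_iff (failureWeight_pos hz hp).ne', hprod, failureWeight, one_div_pow]
  set u := log p / log z
  field_simp

lemma sum_prod_mul_two_pow_mul_moebiusSum_isFirstFailure_insert_sq_le (hβ : 12 ≤ β) (hz : 1 < z)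
    (hs : 1 < s) (hzE : z ^ s ≤ E) (hp : p ∈ primesLT z) :
    ∑ B ∈ powerset {q ∈ primesLT z | p < q}, (∏ q ∈ B, (q : ℝ)) * 2 ^ #B *
        moebiusSum (fun B => IsFirstFailure β E o (insert p B) p) B {q ∈ primesLT z | p < q} ^ 2 ≤
      exp 40 / ((s - 1) / (β + 1)) ^ 16 * (log p / log z) ^ 4 := by
  have hκ : 0 < (s - 1) / (β + 1) := div_pos (sub_pos.2 hs) (by positivity)
  have hu := log_div_log_pos hz hp
  have hzero : 0 ∉ ({q ∈ primesLT z | p < q} : Finset ℕ) := fun h =>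
    Nat.not_prime_zero (prime_of_mem_primesLT (mem_filter.1 h).1)
  have hfail : ∀ M ⊆ ({q ∈ primesLT z | p < q} : Finset ℕ),
      IsFirstFailure β E o (insert p M) p →
        1 ≤ ((log p / log z) / ((s - 1) / (β + 1))) ^ 8 * 2 ^ #M := by
    intro M hM h
    have hfilter : {q ∈ insert p M | p < q} = M := by
      rw [filter_insert, if_neg (lt_irrefl p)]
      exact filter_true_of_mem fun q hq => (mem_filter.1 (hM hq)).2
    have hpow := h.pow_le hβ hz hs.le hzE
      (insert_subset hp (hM.trans (filter_subset _ _)))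
    rw [hfilter] at hpow
    rwa [div_pow, div_mul_eq_mul_div, one_le_div (by positivity), mul_comm]
  have hprod := prod_primesLT_one_add_le hp 12 (b := 4) (by norm_num)
  push_cast at hprod
  calc _ ≤ (((log p / log z) / ((s - 1) / (β + 1))) ^ 8) ^ 2 *
          (exp (3 * 12 + 4) * (log z / log p) ^ 12) := by
        grw [sum_prod_mul_two_pow_mul_moebiusSum_sq_le hzero (by positivity) hfail, hprod]
    _ = exp 40 / ((s - 1) / (β + 1)) ^ 16 * (log p / log z) ^ 4 := by
        rw [← inv_div (log (p : ℝ))]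
        norm_num only [div_pow _ ((s - 1) / (β + 1)), inv_pow]
        field_simp

lemma sum_prod_div_failureWeight_mul_moebiusSum_sq (hz : 1 < z) (hp : p ∈ primesLT z) :
    ∑ S ∈ (primesLT z).powerset, (∏ q ∈ S, (q : ℝ)) / failureWeight z S p *
        moebiusSum (IsFirstFailure β E o · p) S (primesLT z) ^ 2 =
      2 / (p * (log p / log z)) *
        (∑ A ∈ powerset {q ∈ primesLT z | q < p}, (∏ q ∈ A, (q : ℝ)) *
          moebiusSum (fun _ => True) A {q ∈ primesLT z | q < p} ^ 2) *
        ∑ B ∈ powerset {q ∈ primesLT z | p < q}, (∏ q ∈ B, (q : ℝ)) * 2 ^ #B *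
          moebiusSum (fun B => IsFirstFailure β E o (insert p B) p) B
            {q ∈ primesLT z | p < q} ^ 2 := by
  have hp₀ : (0 : ℝ) < p := by exact_mod_cast (prime_of_mem_primesLT hp).pos
  set f := fun A : Finset ℕ => (∏ q ∈ A, (q : ℝ)) *
    moebiusSum (fun _ => True) A {q ∈ primesLT z | q < p} ^ 2
  set g := fun B : Finset ℕ => (∏ q ∈ B, (q : ℝ)) * 2 ^ #B *
    moebiusSum (fun B => IsFirstFailure β E o (insert p B) p) B {q ∈ primesLT z | p < q} ^ 2
  calc ∑ S ∈ (primesLT z).powerset, (∏ q ∈ S, (q : ℝ)) / failureWeight z S p *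
        moebiusSum (IsFirstFailure β E o · p) S (primesLT z) ^ 2
      = ∑ S ∈ (primesLT z).powerset,
          1 / (p * (log p / log z)) * (f {q ∈ S | q < p} * g {q ∈ S | p < q}) := by
        refine sum_congr rfl fun S _ => ?_
        rw [prod_div_failureWeight hz hp, moebiusSum_isFirstFailure hp]
        simp only [f, g]
        field_simp
    _ = 2 / (p * (log p / log z)) * (∑ A ∈ powerset {q ∈ primesLT z | q < p}, f A) *
          ∑ B ∈ powerset {q ∈ primesLT z | p < q}, g B := by
        rw [← mul_sum, sum_powerset_split hp fun A B => f A * g B, ← sum_mul_sum]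
        ring

lemma sum_prod_div_failureWeight_mul_moebiusSum_sq_le (hβ : 12 ≤ β) (hz : 1 < z)
    (hs : 1 < s) (hzE : z ^ s ≤ E) (hp : p ∈ primesLT z) :
    ∑ S ∈ (primesLT z).powerset, (∏ q ∈ S, (q : ℝ)) / failureWeight z S p *
        moebiusSum (IsFirstFailure β E o · p) S (primesLT z) ^ 2 ≤
      2 * exp 42 / ((s - 1) / (β + 1)) ^ 16 / log z * (log p / log z / p) := by
  have hp₁ : (1 : ℝ) < p := by exact_mod_cast (prime_of_mem_primesLT hp).one_lt
  have hlogp := log_pos hp₁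
  have hlogz := log_pos hz
  have hbelow : ∑ A ∈ powerset {q ∈ primesLT z | q < p}, (∏ q ∈ A, (q : ℝ)) *
      moebiusSum (fun _ => True) A {q ∈ primesLT z | q < p} ^ 2 ≤ exp 2 / log p := by
    rw [primesLT_filter_lt hp, sum_prod_mul_moebiusSum_true_sq fun h =>
      Nat.not_prime_zero (prime_of_mem_primesLT h)]
    exact prod_primesLT_one_sub_add_sq_le hp₁
  have habove := sum_prod_mul_two_pow_mul_moebiusSum_isFirstFailure_insert_sq_le (o := o)
    hβ hz hs hzE hp
  rw [sum_prod_div_failureWeight_mul_moebiusSum_sq hz hp]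
  calc _ ≤ 2 / (p * (log p / log z)) * (exp 2 / log p) *
          (exp 40 / ((s - 1) / (β + 1)) ^ 16 * (log p / log z) ^ 4) := by gcongr
    _ = 2 * exp 42 / ((s - 1) / (β + 1)) ^ 16 / log z * (log p / log z / p) *
          (log p / log z) := by
        rw [show (42 : ℝ) = 2 + 40 by norm_num, exp_add]
        field_simp
    _ ≤ _ := mul_le_of_le_one_right (by positivity) (log_div_log_le_one hz hp)

lemma sum_prod_mul_sum_moebiusSum_sq_le (hβ : 12 ≤ β) (hz : 1 < z) (hs : 1 < s)
    (hzE : z ^ s ≤ E) :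
    ∑ S ∈ (primesLT z).powerset, (∏ q ∈ S, (q : ℝ)) *
        (∑ p ∈ primesLT z, moebiusSum (IsFirstFailure β E o · p) S (primesLT z)) ^ 2 ≤
      30 * exp 42 / ((s - 1) / (β + 1)) ^ 16 / log z := by
  set T := fun (S : Finset ℕ) (p : ℕ) => moebiusSum (IsFirstFailure β E o · p) S (primesLT z)
  have hlogz := log_pos hz
  have cauchy_schwarz : ∀ S ∈ (primesLT z).powerset, (∑ p ∈ primesLT z, T S p) ^ 2 ≤
      5 * ∑ p ∈ primesLT z, T S p ^ 2 / failureWeight z S p := by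
    intro S hS
    have hpos : ∀ p ∈ primesLT z, 0 < failureWeight z S p := fun p hp => failureWeight_pos hz hp
    have hnonneg : ∀ p ∈ primesLT z, 0 ≤ T S p ^ 2 / failureWeight z S p := fun p hp =>
      div_nonneg (sq_nonneg _) (hpos p hp).le
    grw [sum_sq_le_sum_mul_sum_of_sq_le_mul _ (fun p hp => (hpos p hp).le) hnonneg
      fun p hp => (mul_div_cancel₀ _ (hpos p hp).ne').ge]
    exact mul_le_mul_of_nonneg_right (sum_failureWeight_le hz (mem_powerset.1 hS))
      (sum_nonneg hnonneg)
  calc ∑ S ∈ (primesLT z).powerset, (∏ q ∈ S, (q : ℝ)) * (∑ p ∈ primesLT z, T S p) ^ 2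
      ≤ ∑ S ∈ (primesLT z).powerset, (∏ q ∈ S, (q : ℝ)) *
          (5 * ∑ p ∈ primesLT z, T S p ^ 2 / failureWeight z S p) := by
        refine sum_le_sum fun S hS => mul_le_mul_of_nonneg_left (cauchy_schwarz S hS) ?_
        exact prod_nonneg fun q _ => Nat.cast_nonneg q
    _ = 5 * ∑ p ∈ primesLT z, ∑ S ∈ (primesLT z).powerset,
          (∏ q ∈ S, (q : ℝ)) / failureWeight z S p * T S p ^ 2 := by
        rw [sum_comm, mul_sum]
        refine sum_congr rfl fun S _ => ?_
        simp only [mul_sum]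
        exact sum_congr rfl fun p _ => by ring
    _ ≤ 5 * ∑ p ∈ primesLT z,
          2 * exp 42 / ((s - 1) / (β + 1)) ^ 16 / log z * (log p / log z / p) := by
        gcongr with p hp
        exact sum_prod_div_failureWeight_mul_moebiusSum_sq_le hβ hz hs hzE hp
    _ ≤ 5 * (2 * exp 42 / ((s - 1) / (β + 1)) ^ 16 / log z * 3) := by
        rw [← mul_sum]
        gcongr
        exact sum_primesLT_log_div_log_div_le hz
    _ = 30 * exp 42 / ((s - 1) / (β + 1)) ^ 16 / log z := by ring

lemma sum_prod_mul_moebiusSum_isAdmissible_sq_le (hβ : 12 ≤ β) (hz : 1 < z) (hs : 1 < s)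
    (hzE : z ^ s ≤ E) :
    ∑ S ∈ (primesLT z).powerset, (∏ q ∈ S, (q : ℝ)) *
        moebiusSum (IsAdmissible β E o) S (primesLT z) ^ 2 ≤
      (2 * exp 2 + 60 * exp 42 / ((s - 1) / (β + 1)) ^ 16) / log z := by
  have htotal : ∑ S ∈ (primesLT z).powerset, (∏ q ∈ S, (q : ℝ)) *
      moebiusSum (fun _ => True) S (primesLT z) ^ 2 ≤ exp 2 / log z := by
    rw [sum_prod_mul_moebiusSum_true_sq fun h => Nat.not_prime_zero (prime_of_mem_primesLT h)]
    exact prod_primesLT_one_sub_add_sq_le hz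
  have hfail := sum_prod_mul_sum_moebiusSum_sq_le (o := o) hβ hz hs hzE
  calc _ ≤ ∑ S ∈ (primesLT z).powerset, (2 * ((∏ q ∈ S, (q : ℝ)) *
            moebiusSum (fun _ => True) S (primesLT z) ^ 2) +
          2 * ((∏ q ∈ S, (q : ℝ)) *
            (∑ p ∈ primesLT z, moebiusSum (IsFirstFailure β E o · p) S (primesLT z)) ^ 2)) := by
        refine sum_le_sum fun S _ => ?_
        have hprod : 0 ≤ ∏ q ∈ S, (q : ℝ) := prod_nonneg fun q _ => Nat.cast_nonneg q
        rw [moebiusSum_isAdmissible]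
        set a := moebiusSum (fun _ => True) S (primesLT z)
        set b := ∑ p ∈ primesLT z, moebiusSum (IsFirstFailure β E o · p) S (primesLT z)
        nlinarith [mul_nonneg hprod (sq_nonneg (a + b))]
    _ ≤ 2 * (exp 2 / log z) + 2 * (30 * exp 42 / ((s - 1) / (β + 1)) ^ 16 / log z) := by
        rw [sum_add_distrib, ← mul_sum, ← mul_sum]
        gcongr
    _ = _ := by ring

end MeanSquare

/-! ### Sieve weights as Möbius sums -/

section Translation

variable {β : ℕ} {z E : ℝ} {o : Bool} {M : Finset ℕ}

lemma filter_le_toFinset {α : Type*} [LinearOrder α] {L : List α} (hL : L.SortedGT) {i : ℕ}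
    (hi : i < L.length) : {r ∈ L.toFinset | L[i] ≤ r} = (L.take (i + 1)).toFinset := by
  ext r
  simp only [mem_filter, List.mem_toFinset, List.mem_take_iff_getElem]
  constructor
  · rintro ⟨hr, hle⟩
    obtain ⟨j, hj, rfl⟩ := List.mem_iff_getElem.1 hr
    exact ⟨j, lt_min (Nat.lt_succ_of_le (hL.getElem_le_getElem_iff.1 hle)) hj, rfl⟩
  · rintro ⟨j, hj, rfl⟩
    exact ⟨List.getElem_mem _, hL.getElem_le_getElem_iff.2
      (Nat.le_of_lt_succ (lt_min_iff.1 hj).1)⟩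

lemma isAdmissible_toFinset_iff {L : List ℕ} (hL : L.SortedGT) :
    IsAdmissible β E o L.toFinset ↔
      ∀ m : ℕ, 1 ≤ m → m ≤ L.length → (if o then Odd m else Even m) →
        (((L.take m).prod : ℕ) : ℝ) * ((L.getD (m - 1) 1 : ℕ) : ℝ) ^ β < E := by
  have hcondition : ∀ i (hi : i < L.length), SieveCondition β E o L.toFinset L[i] ↔
      ((if o then Odd (i + 1) else Even (i + 1)) →
        (((L.take (i + 1)).prod : ℕ) : ℝ) * ((L.getD i 1 : ℕ) : ℝ) ^ β < E) := by
    intro i hi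
    have hnodup : (L.take (i + 1)).Nodup := hL.nodup.sublist (List.take_sublist _ _)
    rw [SieveCondition, HasParity, filter_le_toFinset hL hi, List.toFinset_card_of_nodup hnodup,
      List.length_take, Nat.min_eq_left hi, List.getD_eq_getElem _ _ hi, ← Nat.cast_prod,
      List.prod_toFinset (fun r => r) hnodup, List.map_id']
  constructor
  · intro h m hm hmL
    obtain ⟨i, rfl⟩ := Nat.exists_eq_add_of_le' hm
    exact (hcondition i hmL).1 (h _ (List.mem_toFinset.2 (List.getElem_mem hmL)))
  · intro h q hq
    obtain ⟨i, hi, rfl⟩ := List.mem_iff_getElem.1 (List.mem_toFinset.1 hq)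
    exact (hcondition i hi).2 (h (i + 1) (Nat.le_add_left 1 i) hi)

lemma squarefree_prod_of_prime (hM : ∀ q ∈ M, q.Prime) : Squarefree (∏ q ∈ M, q) :=
  squarefree_prod_of_pairwise_isCoprime
    (fun _ ha _ hb hab =>
      Nat.coprime_iff_isRelPrime.1 ((Nat.coprime_primes (hM _ ha) (hM _ hb)).2 hab))
    fun q hq => (hM q hq).squarefree

lemma sieveWeight_prod_div_prod (hM : M ⊆ primesLT z) :
    sieveWeight 0 z E β o (∏ q ∈ M, q) / ((∏ q ∈ M, q : ℕ) : ℝ) =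
      if IsAdmissible β E o M then ∏ q ∈ M, (-1 / (q : ℝ)) else 0 := by
  have hprime : ∀ q ∈ M, q.Prime := fun q hq => prime_of_mem_primesLT (hM hq)
  have hsq := squarefree_prod_of_prime hprime
  have hfactors := Nat.primeFactors_prod hprime
  have hsorted : (∏ q ∈ M, q).primeFactorsList.reverse.SortedGT :=
    List.sortedGT_reverse.2 (List.sortedLT_iff_nodup_and_sortedLE.2
      ⟨(Nat.squarefree_iff_nodup_primeFactorsList hsq.ne_zero).1 hsq,
        Nat.primeFactorsList_sorted _⟩)
  have hadm := isAdmissible_toFinset_iff (β := β) (E := E) (o := o) hsorted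
  rw [List.toFinset_reverse, ← Nat.primeFactors, hfactors, List.length_reverse] at hadm
  have hrange : ∀ q ∈ (∏ q ∈ M, q).primeFactors, (0 : ℝ) ≤ q ∧ (q : ℝ) < z := by
    rw [hfactors]
    exact fun q hq => ⟨Nat.cast_nonneg q, (mem_primesLT.1 (hM hq)).2⟩
  have hmoebius : ArithmeticFunction.moebius (∏ q ∈ M, q) = ∏ q ∈ M, (-1) :=
    (ArithmeticFunction.isMultiplicative_moebius.map_prod_of_prime M hprime).trans
      (prod_congr rfl fun q hq => ArithmeticFunction.moebius_apply_prime (hprime q hq))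
  simp only [sieveWeight, ← hadm, and_iff_right hsq, and_iff_right hrange, ite_div, zero_div]
  rw [hmoebius, Int.cast_prod, Nat.cast_prod, ← prod_div_distrib]
  simp only [Int.cast_neg, Int.cast_one]

lemma dividesPrimorial_iff {d : ℕ} :
    dividesPrimorial z d ↔ ∃ S ⊆ primesLT z, ∏ q ∈ S, q = d := by
  constructor
  · rintro ⟨hsq, hlt⟩
    exact ⟨d.primeFactors, fun q hq =>
      mem_primesLT.2 ⟨Nat.prime_of_mem_primeFactors hq, hlt q hq⟩,
      Nat.prod_primeFactors_of_squarefree hsq⟩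
  · rintro ⟨S, hS, rfl⟩
    have hprime : ∀ q ∈ S, q.Prime := fun q hq => prime_of_mem_primesLT (hS hq)
    refine ⟨squarefree_prod_of_prime hprime, ?_⟩
    rw [Nat.primeFactors_prod hprime]
    exact fun q hq => (mem_primesLT.1 (hS hq)).2

lemma tsum_dividesPrimorial (z : ℝ) (F : ℕ → ℝ) :
    (∑' d : ℕ, if dividesPrimorial z d then F d else 0) =
      ∑ S ∈ (primesLT z).powerset, F (∏ q ∈ S, q) := by
  have hinj : Set.InjOn (fun S : Finset ℕ => ∏ q ∈ S, q) (primesLT z).powerset := by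
    intro S hS T hT (h : ∏ q ∈ S, q = ∏ q ∈ T, q)
    rw [← Nat.primeFactors_prod fun q hq => prime_of_mem_primesLT (mem_powerset.1 hS hq), h,
      Nat.primeFactors_prod fun q hq => prime_of_mem_primesLT (mem_powerset.1 hT hq)]
  have hmem : ∀ d, d ∈ (primesLT z).powerset.image (fun S => ∏ q ∈ S, q) ↔
      dividesPrimorial z d := fun d => by
    simp only [mem_image, mem_powerset, dividesPrimorial_iff]
  rw [tsum_eq_sum fun d hd => if_neg (mt (hmem d).2 hd), sum_image hinj]
  refine sum_congr rfl fun S hS => if_pos ((hmem _).1 (mem_image_of_mem _ hS))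

lemma prod_dvd_prod_iff_of_prime {S : Finset ℕ} (hS : ∀ q ∈ S, q.Prime)
    (hM : ∀ q ∈ M, q.Prime) : ∏ q ∈ S, q ∣ ∏ q ∈ M, q ↔ S ⊆ M := by
  refine ⟨fun h => ?_, fun h => prod_dvd_prod_of_subset _ _ _ h⟩
  have hsub := Nat.primeFactors_mono h (squarefree_prod_of_prime hM).ne_zero
  rwa [Nat.primeFactors_prod hS, Nat.primeFactors_prod hM] at hsub

lemma tsum_dividesPrimorial_mul_sq (β : ℕ) (z E : ℝ) (o : Bool) :
    (∑' d : ℕ, if dividesPrimorial z d then (d : ℝ) * (∑' m : ℕ,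
        if dividesPrimorial z m ∧ d ∣ m then sieveWeight 0 z E β o m / m else 0) ^ 2 else 0) =
      ∑ S ∈ (primesLT z).powerset, (∏ q ∈ S, (q : ℝ)) *
        moebiusSum (IsAdmissible β E o) S (primesLT z) ^ 2 := by
  have hprime : ∀ M ∈ (primesLT z).powerset, ∀ q ∈ M, q.Prime := fun M hM q hq =>
    prime_of_mem_primesLT (mem_powerset.1 hM hq)
  have hIcc : ∀ S, Icc S (primesLT z) = {M ∈ (primesLT z).powerset | S ⊆ M} := fun S => by
    ext M
    rw [mem_Icc, mem_filter, mem_powerset, and_comm]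
  simp only [ite_and, tsum_dividesPrimorial]
  refine sum_congr rfl fun S hS => ?_
  rw [Nat.cast_prod, moebiusSum, hIcc, sum_filter, sum_filter]
  congr 2
  refine sum_congr rfl fun M hM => ?_
  simp only [prod_dvd_prod_iff_of_prime (hprime S hS) (hprime M hM),
    sieveWeight_prod_div_prod (mem_powerset.1 hM)]

end Translation

end BetaSieve

theorem beta_sieve_weights_mean_square_general (β : ℕ) (hβ : 12 ≤ β) (s : ℝ) (hs : 1 < s) :
    ∃ C : ℝ, 0 < C ∧ ∀ z E : ℝ, 1 < z → z ^ s ≤ E → ∀ useOdd : Bool,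
      (∑' d : ℕ, if dividesPrimorial z d then
          (d : ℝ) * (∑' m : ℕ, if dividesPrimorial z m ∧ d ∣ m then
              sieveWeight 0 z E β useOdd m / m else 0) ^ 2
        else 0) ≤ C / Real.log z := by
  refine ⟨2 * Real.exp 2 + 60 * Real.exp 42 / ((s - 1) / (β + 1)) ^ 16, by positivity,
    fun z E hz hzE useOdd => ?_⟩
  rw [BetaSieve.tsum_dividesPrimorial_mul_sq]
  exact BetaSieve.sum_prod_mul_moebiusSum_isAdmissible_sq_le hβ hz hs hzE

/-- Mean square bound for the β-sieve weights `ρ^±` (with `β = 30`, sifting range `< w`,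
level `E = X^{1/1000}`, `w = X^δ` for fixed `δ ∈ (0, 1/30000]`):
`Σ_{d ∣ P(w)} d·(Σ_{m ∣ P(w), d ∣ m} ρ_m^±/m)² ≤ C(δ)/log X` for both choices of sign. -/
theorem beta_sieve_weights_mean_square (δ : ℝ) (hδ : 0 < δ) (hδ' : δ ≤ 1 / 30000) :
    ∃ C : ℝ, 0 < C ∧ ∀ X : ℝ, 2 ≤ X → ∀ useOdd : Bool,
      (∑' d : ℕ, if dividesPrimorial (X ^ δ) d then
          (d : ℝ) * (∑' m : ℕ, if dividesPrimorial (X ^ δ) m ∧ d ∣ m then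
              sieveWeight 0 (X ^ δ) (X ^ ((1 : ℝ) / 1000)) 30 useOdd m / m else 0) ^ 2
        else 0) ≤ C / Real.log X := by
  obtain ⟨C, hC, h⟩ := beta_sieve_weights_mean_square_general 30 (by norm_num) 30 (by norm_num)
  refine ⟨C / δ, div_pos hC hδ, fun X hX useOdd => ?_⟩
  have hX₁ : 1 < X := one_lt_two.trans_le hX
  have hX₀ : 0 < X := one_pos.trans hX₁
  have hlevel : (X ^ δ) ^ (30 : ℝ) ≤ X ^ ((1 : ℝ) / 1000) := by
    rw [← Real.rpow_mul hX₀.le]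
    exact Real.rpow_le_rpow_of_exponent_le hX₁.le (by linarith)
  have hbound := h (X ^ δ) _ (Real.one_lt_rpow hX₁ hδ) hlevel useOdd
  rwa [Real.log_rpow hX₀, ← div_div] at hbound
end
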